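/- Let g be a finite-dimensional real Lie algebra with a norm. The subgroup P(g)₀ of the path group P(g) = C([0,1], g) is a closed and path-connected subset of the Banach space C([0,1], g) with the supremum norm. -/

import Mathlib

/-- `IsLieBracket B` says that the bilinear map `B = ⁅·,·⁆` makes the
(finite-dimensional, normed) real vector space `g` into a real Lie algebra:
it is alternating and satisfies the Jacobi identity (in Leibniz form). -/
def IsLieBracket {g : Type*} [NormedAddCommGroup g] [NormedSpace ℝ g]
    (B : g →ₗ[ℝ] g →ₗ[ℝ] g) : Prop :=
  (∀ x : g, B x x = 0) ∧
  (∀ x y z : g, B x (B y z) = B (B x y) z + B y (B x z))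

/-- The adjoint endomorphism `ad x = ⁅x, ·⁆` as a continuous linear map. -/
noncomputable def adL {g : Type*} [NormedAddCommGroup g] [NormedSpace ℝ g]
    [FiniteDimensional ℝ g] (B : g →ₗ[ℝ] g →ₗ[ℝ] g) (x : g) : g →L[ℝ] g :=
  LinearMap.toContinuousLinearMap (B x)

/-- `IsTransport B γ A` says that `A : [0,1] → End(g)` is a continuously
differentiable path of linear endomorphisms of `g` with `A 0 = id` and
`A' t = ad (γ t) ∘ A t` for `t ∈ [0,1]` (one-sided derivatives at the
endpoints, and the derivative is continuous on `[0,1]`). -/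
def IsTransport {g : Type*} [NormedAddCommGroup g] [NormedSpace ℝ g]
    [FiniteDimensional ℝ g] (B : g →ₗ[ℝ] g →ₗ[ℝ] g)
    (γ : ℝ → g) (A : ℝ → (g →L[ℝ] g)) : Prop :=
  A 0 = 1 ∧
  (∀ t ∈ Set.Icc (0:ℝ) 1,
    HasDerivWithinAt A ((adL B (γ t)).comp (A t)) (Set.Icc (0:ℝ) 1) t) ∧
  ContinuousOn (fun t => (adL B (γ t)).comp (A t)) (Set.Icc (0:ℝ) 1)

/-- The path `A_γ : [0,1] → End(g)`, i.e. the unique continuously differentiable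
solution of `A 0 = id`, `A' t = ad (γ t) ∘ A t` (chosen via choice; for a
continuous path `γ` it exists and is unique on `[0,1]`). -/
noncomputable def transport {g : Type*} [NormedAddCommGroup g] [NormedSpace ℝ g]
    [FiniteDimensional ℝ g] (B : g →ₗ[ℝ] g →ₗ[ℝ] g) (γ : ℝ → g) :
    ℝ → (g →L[ℝ] g) :=
  letI := Classical.propDecidable (∃ A : ℝ → (g →L[ℝ] g), IsTransport B γ A)
  if h : ∃ A : ℝ → (g →L[ℝ] g), IsTransport B γ A then h.choose else fun _ => 1

/-- Extension of a continuous path `[0,1] → g` to all of `ℝ` (constant outside `[0,1]`). -/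
noncomputable def pathExt {g : Type*} [TopologicalSpace g]
    (γ : C(Set.Icc (0:ℝ) 1, g)) : ℝ → g :=
  Set.IccExtend zero_le_one ⇑γ

/-- The Duistermaat–Kolk multiplication of paths: `(γ · δ)(t) = γ t + A_γ(t) (δ t)`,
as a `g`-valued function on `[0,1]`. -/
noncomputable def pathMul {g : Type*} [NormedAddCommGroup g] [NormedSpace ℝ g]
    [FiniteDimensional ℝ g] (B : g →ₗ[ℝ] g →ₗ[ℝ] g)
    (γ δ : C(Set.Icc (0:ℝ) 1, g)) : Set.Icc (0:ℝ) 1 → g :=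
  fun t => γ t + transport B (pathExt γ) t (δ t)

/-- The Duistermaat–Kolk inversion of paths: `ι(γ)(t) = -A_γ(t)⁻¹ (γ t)`,
as a `g`-valued function on `[0,1]`. -/
noncomputable def pathInv {g : Type*} [NormedAddCommGroup g] [NormedSpace ℝ g]
    [FiniteDimensional ℝ g] (B : g →ₗ[ℝ] g →ₗ[ℝ] g)
    (γ : C(Set.Icc (0:ℝ) 1, g)) : Set.Icc (0:ℝ) 1 → g :=
  fun t => -(Ring.inverse (transport B (pathExt γ) t) (γ t))

/-- `InPathZero B γ` says that `γ` belongs to the subset `P(g)₀` of the path group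
`P(g) = C([0,1], g)`: there is a continuously differentiable family
`Γ : [0,1] → P(g)` (with derivative `Γ'`) joining the constant path `0` to `γ`
such that `∫₀¹ A_{Γ s}(t)⁻¹ (Γ' s (t)) dt = 0` for all `s ∈ [0,1]`. -/
noncomputable def InPathZero {g : Type*} [NormedAddCommGroup g] [NormedSpace ℝ g]
    [FiniteDimensional ℝ g] (B : g →ₗ[ℝ] g →ₗ[ℝ] g)
    (γ : C(Set.Icc (0:ℝ) 1, g)) : Prop :=
  ∃ Γ Γ' : ℝ → C(Set.Icc (0:ℝ) 1, g),
    (∀ s ∈ Set.Icc (0:ℝ) 1, HasDerivWithinAt Γ (Γ' s) (Set.Icc (0:ℝ) 1) s) ∧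
    ContinuousOn Γ' (Set.Icc (0:ℝ) 1) ∧
    Γ 0 = 0 ∧ Γ 1 = γ ∧
    ∀ s ∈ Set.Icc (0:ℝ) 1,
      (∫ t in (0:ℝ)..1,
        Ring.inverse (transport B (pathExt (Γ s)) t) (pathExt (Γ' s) t)) = 0

section CEAlgebra

local notation "Λ" => ExteriorAlgebra ℝ

variable {g : Type*} [AddCommGroup g] [Module ℝ g]

local notation "ιι" => ExteriorAlgebra.ι ℝ

theorem ext_left_induction {P : Λ g → Prop} (h0 : ∀ r : ℝ, P (algebraMap ℝ (Λ g) r))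
    (hadd : ∀ x y, P x → P y → P (x + y)) (hmul : ∀ (m : g) x, P x → P (ιι m * x)) (x : Λ g) :
    P x :=
  CliffordAlgebra.left_induction (Q := (0 : QuadraticForm ℝ g)) h0 hadd
    (fun x m h => hmul m x h) x

theorem ce_anti (a b : g) (v : Λ g) : ιι a * (ιι b * v) = - (ιι b * (ιι a * v)) := by
  have := ExteriorAlgebra.ι_add_mul_swap (R := ℝ) a b
  rw [← mul_assoc, ← mul_assoc, eq_neg_of_add_eq_zero_left this, neg_mul]

theorem ce_sq (a : g) (v : Λ g) : ιι a * (ιι a * v) = 0 := by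
  rw [← mul_assoc, ExteriorAlgebra.ι_sq_zero, zero_mul]

noncomputable def ceThetaAux (T : g →ₗ[ℝ] g) : g →ₗ[ℝ] (Λ g × Λ g) →ₗ[ℝ] Λ g :=
  LinearMap.mk₂ ℝ (fun m p => ιι (T m) * p.1 + ιι m * p.2)
    (by intros; simp [add_mul]; abel) (by intros; simp)
    (by intros; simp [mul_add]; abel) (by intros; simp)

noncomputable def ceTheta0 (T : g →ₗ[ℝ] g) : Λ g →ₗ[ℝ] Λ g :=
  CliffordAlgebra.foldr' (0 : QuadraticForm ℝ g) (ceThetaAux T) (by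
    intro m x fx
    change ιι (T m) * (ιι m * x) + ιι m * (ιι (T m) * x + ιι m * fx) = (0 : ℝ) • fx
    rw [ce_anti, mul_add, ce_sq]; simp) 0

theorem ceTheta0_alg (T : g →ₗ[ℝ] g) (r : ℝ) : ceTheta0 T (algebraMap ℝ (Λ g) r) = 0 := by
  refine (CliffordAlgebra.foldr'_algebraMap _ _ _ _ _).trans ?_
  simp

theorem ceTheta0_mul (T : g →ₗ[ℝ] g) (m : g) (v : Λ g) :
    ceTheta0 T (ιι m * v) = ιι (T m) * v + ιι m * ceTheta0 T v :=
  CliffordAlgebra.foldr'_ι_mul _ _ _ _ _ _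

noncomputable def ceTheta (B : g →ₗ[ℝ] g →ₗ[ℝ] g) : g →ₗ[ℝ] Λ g →ₗ[ℝ] Λ g where
  toFun y := ceTheta0 (B y)
  map_add' y z := by
    rw [map_add]
    refine LinearMap.ext fun v => ?_
    induction v using ext_left_induction with
    | h0 r => simp [ceTheta0_alg]
    | hadd x y hx hy => simp only [map_add, hx, hy]
    | hmul m x hx =>
      simp only [LinearMap.add_apply] at hx ⊢
      simp only [ceTheta0_mul, hx, map_add, LinearMap.add_apply, mul_add, add_mul]; abel
  map_smul' c z := by
    rw [map_smul]
    refine LinearMap.ext fun v => ?_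
    induction v using ext_left_induction with
    | h0 r => simp [ceTheta0_alg]
    | hadd x y hx hy => simp only [map_add, hx, hy]
    | hmul m x hx =>
      simp only [LinearMap.smul_apply, RingHom.id_apply] at hx ⊢
      simp only [ceTheta0_mul, hx, map_smul, LinearMap.smul_apply, smul_add, smul_mul_assoc,
        mul_smul_comm]

variable (B : g →ₗ[ℝ] g →ₗ[ℝ] g)

theorem ceTheta_alg (y : g) (r : ℝ) : ceTheta B y (algebraMap ℝ (Λ g) r) = 0 := ceTheta0_alg _ _

theorem ceTheta_mul (y m : g) (v : Λ g) :
    ceTheta B y (ιι m * v) = ιι (B y m) * v + ιι m * ceTheta B y v := ceTheta0_mul _ _ _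

noncomputable def ceDAux : g →ₗ[ℝ] (Λ g × Λ g) →ₗ[ℝ] Λ g :=
  LinearMap.mk₂ ℝ (fun m p => ceTheta B m p.1 - ιι m * p.2)
    (by intros; simp [add_mul]; abel) (by intros; simp [smul_sub])
    (by intros; simp [mul_add]; abel) (by intros; simp [smul_sub])

noncomputable def ceD (hB : ∀ x, B x x = 0) : Λ g →ₗ[ℝ] Λ g :=
  CliffordAlgebra.foldr' (0 : QuadraticForm ℝ g) (ceDAux B) (by
    intro m x fx
    change ceTheta B m (ιι m * x) - ιι m * (ceTheta B m x - ιι m * fx) = (0 : ℝ) • fx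
    rw [ceTheta_mul, hB, mul_sub, ce_sq]; simp) 0

variable (hB : ∀ x, B x x = 0)

theorem ceD_alg (r : ℝ) : ceD B hB (algebraMap ℝ (Λ g) r) = 0 := by
  refine (CliffordAlgebra.foldr'_algebraMap _ _ _ _ _).trans ?_
  simp

theorem ceD_mul (m : g) (v : Λ g) :
    ceD B hB (ιι m * v) = ceTheta B m v - ιι m * ceD B hB v :=
  CliffordAlgebra.foldr'_ι_mul _ _ _ _ _ _

theorem ceTheta_lie (hJ : ∀ x y z : g, B x (B y z) = B (B x y) z + B y (B x z)) (y z : g)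
    (v : Λ g) : ceTheta B (B y z) v =
      ceTheta B y (ceTheta B z v) - ceTheta B z (ceTheta B y v) := by
  induction v using ext_left_induction with
  | h0 r => simp [ceTheta_alg]
  | hadd x y hx hy => simp only [map_add, hx, hy]; abel
  | hmul m x hx =>
    simp only [ceTheta_mul, hx, map_add, hJ y z m, add_mul, mul_sub]; abel

theorem ceTheta_D (hJ : ∀ x y z : g, B x (B y z) = B (B x y) z + B y (B x z)) (y : g)
    (v : Λ g) : ceD B hB (ceTheta B y v) = ceTheta B y (ceD B hB v) := by
  induction v using ext_left_induction with
  | h0 r => simp [ceTheta_alg, ceD_alg]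
  | hadd x y hx hy => simp only [map_add, hx, hy]
  | hmul m x hx =>
    simp only [ceTheta_mul, ceD_mul, hx, map_add, map_sub, ceTheta_lie B hJ]; abel

theorem ceD_D (hJ : ∀ x y z : g, B x (B y z) = B (B x y) z + B y (B x z)) (v : Λ g) :
    ceD B hB (ceD B hB v) = 0 := by
  induction v using ext_left_induction with
  | h0 r => simp [ceD_alg]
  | hadd x y hx hy => simp only [map_add, hx, hy, add_zero]
  | hmul m x hx =>
    simp only [ceD_mul, hx, map_sub, ceTheta_D B hB hJ]; simp

theorem ceTheta_map (f : g →ₗ[ℝ] g) (hf : ∀ x y, f (B x y) = B (f x) (f y)) (y : g) (v : Λ g) :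
    ceTheta B (f y) (ExteriorAlgebra.map f v) = ExteriorAlgebra.map f (ceTheta B y v) := by
  induction v using ext_left_induction with
  | h0 r => simp [ceTheta_alg]
  | hadd x y hx hy => simp only [map_add, hx, hy]
  | hmul m x hx =>
    simp only [map_mul, ExteriorAlgebra.map_apply_ι, ceTheta_mul, map_add, hx, hf]

theorem ceD_map (f : g →ₗ[ℝ] g) (hf : ∀ x y, f (B x y) = B (f x) (f y)) (v : Λ g) :
    ceD B hB (ExteriorAlgebra.map f v) = ExteriorAlgebra.map f (ceD B hB v) := by
  induction v using ext_left_induction with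
  | h0 r => simp [ceD_alg]
  | hadd x y hx hy => simp only [map_add, hx, hy]
  | hmul m x hx =>
    simp only [map_mul, ExteriorAlgebra.map_apply_ι, ceD_mul, map_sub, hx, ceTheta_map B f hf]

theorem ceTheta_central (x : g) (hx : ∀ y, B x y = 0) (v : Λ g) : ceTheta B x v = 0 := by
  induction v using ext_left_induction with
  | h0 r => simp [ceTheta_alg]
  | hadd x y hx hy => simp only [map_add, hx, hy, add_zero]
  | hmul m y hy => simp [ceTheta_mul, hx, hy]

theorem ceD_central (x : g) (hx : ∀ y, B x y = 0) (v : Λ g) :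
    ceD B hB (ιι x * v) = - (ιι x * ceD B hB v) := by
  rw [ceD_mul, ceTheta_central B x hx, zero_sub]

noncomputable def ceI (l : g →ₗ[ℝ] ℝ) : Λ g →ₗ[ℝ] Λ g :=
  CliffordAlgebra.contractLeft (Q := (0 : QuadraticForm ℝ g)) l

theorem ceI_mul (l : g →ₗ[ℝ] ℝ) (m : g) (v : Λ g) :
    ceI l (ιι m * v) = l m • v - ιι m * ceI l v :=
  CliffordAlgebra.contractLeft_ι_mul _ _ _

theorem ceTheta_aug (y : g) (v : Λ g) :
    ExteriorAlgebra.algebraMapInv (ceTheta B y v) = 0 := by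
  induction v using ext_left_induction with
  | h0 r => simp [ceTheta_alg]
  | hadd x y hx hy => simp only [map_add, hx, hy, add_zero]
  | hmul m y hy => simp [ceTheta_mul, ExteriorAlgebra.algebraMapInv]

theorem ceD_aug (v : Λ g) :
    ExteriorAlgebra.algebraMapInv (ceD B hB v) = 0 := by
  induction v using ext_left_induction with
  | h0 r => simp [ceD_alg]
  | hadd x y hx hy => simp only [map_add, hx, hy, add_zero]
  | hmul m y hy => 
    rw [ceD_mul, map_sub, ceTheta_aug]
    simp [ExteriorAlgebra.algebraMapInv]

/-- The algebraic heart: a sequence `w n` with `∂ w (n+1) = -(n+1) x ∧ w n`, `w 0 = 1`, which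
eventually vanishes, forces `x = 0`. -/
theorem ce_key [Module.Finite ℝ g]
    (hJ : ∀ x y z : g, B x (B y z) = B (B x y) z + B y (B x z))
    (x : g) (hx : ∀ y, B x y = 0) (w : ℕ → Λ g) (hw0 : w 0 = 1)
    (hw : ∀ n : ℕ, ceD B hB (w (n + 1)) = - ((n + 1 : ℝ) • (ιι x * w n)))
    (N : ℕ) (hN : w N = 0) : x = 0 := by
  by_contra hne
  obtain ⟨l, hl⟩ : ∃ l : g →ₗ[ℝ] ℝ, l x ≠ 0 := by
    by_contra! h
    exact hne ((Module.forall_dual_apply_eq_zero_iff ℝ x).1 h)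
  have hstep : ∀ n, (∃ a b, w (n + 1) = ceD B hB a + ιι x * b) →
      ∃ a b, w n = ceD B hB a + ιι x * b := by
    rintro n ⟨a, b, hab⟩
    have e1 : ceI l (ceD B hB (w (n + 1))) + ceD B hB (ceI l (w (n + 1))) =
        ceD B hB (ceI l (ceD B hB a)) +
          ιι x * (ceI l (ceD B hB b) + ceD B hB (ceI l b)) := by
      rw [hab]
      simp only [map_add, ceD_D B hB hJ, ceD_central B hB x hx, ceI_mul, map_neg, map_sub,
        map_smul, map_zero, mul_add]
      abel
    rw [hw, map_neg, map_smul, ceI_mul] at e1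
    have hc : ((n + 1 : ℝ) * l x) ≠ 0 := mul_ne_zero (by positivity) hl
    have e2 : ((n + 1 : ℝ) * l x) • w n =
        ceD B hB (ceI l (w (n + 1)) - ceI l (ceD B hB a)) +
          ιι x * ((n + 1 : ℝ) • ceI l (w n) - (ceI l (ceD B hB b) + ceD B hB (ceI l b))) := by
      rw [map_sub, mul_sub, mul_smul_comm, mul_smul]
      rw [smul_sub] at e1
      linear_combination (norm := module) -e1
    refine ⟨((n + 1 : ℝ) * l x)⁻¹ • (ceI l (w (n + 1)) - ceI l (ceD B hB a)),
      ((n + 1 : ℝ) * l x)⁻¹ • ((n + 1 : ℝ) • ceI l (w n) - (ceI l (ceD B hB b) + ceD B hB (ceI l b))),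
      ?_⟩
    rw [map_smul, mul_smul_comm, ← smul_add, ← e2, inv_smul_smul₀ hc]
  have h0 : ∃ a b, w 0 = ceD B hB a + ιι x * b := by
    have : ∀ n, (∃ a b, w n = ceD B hB a + ιι x * b) → ∃ a b, w 0 = ceD B hB a + ιι x * b := by
      intro n
      induction n with
      | zero => exact id
      | succ n ih => exact fun h => ih (hstep n h)
    exact this N ⟨0, 0, by simp [hN]⟩
  obtain ⟨a, b, hab⟩ := h0
  have := congrArg ExteriorAlgebra.algebraMapInv hab
  rw [hw0, map_add, ceD_aug] at this
  simp [ExteriorAlgebra.algebraMapInv] at this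

theorem ext_finite [Module.Finite ℝ g] : Module.Finite ℝ (Λ g) := by
  let b := (Module.finBasis ℝ g).ExteriorAlgebra
  exact Module.Finite.of_basis b

theorem ext_power_zero [Module.Finite ℝ g] (n : ℕ) (h : Module.finrank ℝ g < n) (v : Λ g)
    (hv : v ∈ LinearMap.range (ιι : g →ₗ[ℝ] Λ g) ^ n) : v = 0 := by
  have h1 : Module.finrank ℝ (⋀[ℝ]^n g) = 0 := by
    rw [exteriorPower.finrank_eq, Nat.choose_eq_zero_of_lt h]
  have h2 := Module.finrank_zero_iff.1 h1
  exact congrArg Subtype.val (Subsingleton.elim (⟨v, hv⟩ : ⋀[ℝ]^n g) 0)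

end CEAlgebra

section KeyAnalysis

open Set MeasureTheory

theorem ftc_unit {V : Type*} [NormedAddCommGroup V] [NormedSpace ℝ V] [CompleteSpace V]
    {F F' : ℝ → V} (hF : ∀ t ∈ Icc (0:ℝ) 1, HasDerivWithinAt F (F' t) (Icc (0:ℝ) 1) t)
    (hF' : ContinuousOn F' (Icc (0:ℝ) 1)) : ∫ t in (0:ℝ)..1, F' t = F 1 - F 0 := by
  refine intervalIntegral.integral_eq_sub_of_hasDerivAt_of_le zero_le_one
    (fun t ht => (hF t ht).continuousWithinAt) (fun t ht => ?_) ?_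
  · exact (hF t (Ioo_subset_Icc_self ht)).hasDerivAt (Icc_mem_nhds ht.1 ht.2)
  · apply ContinuousOn.intervalIntegrable
    rwa [uIcc_of_le zero_le_one]

theorem integral_congr_unit {V : Type*} [NormedAddCommGroup V] [NormedSpace ℝ V]
    {F G : ℝ → V} (h : ∀ t ∈ Icc (0:ℝ) 1, F t = G t) :
    ∫ t in (0:ℝ)..1, F t = ∫ t in (0:ℝ)..1, G t := by
  apply intervalIntegral.integral_congr
  intro t ht
  rw [uIcc_of_le zero_le_one] at ht
  exact h t ht

theorem swap_unit {V : Type*} [NormedAddCommGroup V] [NormedSpace ℝ V] [CompleteSpace V]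
    {F : ℝ → ℝ → V} (hF : Continuous (Function.uncurry F)) :
    ∫ s in (0:ℝ)..1, ∫ t in (0:ℝ)..1, F s t = ∫ t in (0:ℝ)..1, ∫ s in (0:ℝ)..1, F s t := by
  apply intervalIntegral_intervalIntegral_swap
  have : IntegrableOn (Function.uncurry F) (Icc (0:ℝ) 1 ×ˢ Icc (0:ℝ) 1) :=
    hF.continuousOn.integrableOn_compact (isCompact_Icc.prod isCompact_Icc)
  refine this.mono_set ?_
  rw [uIoc_of_le zero_le_one]
  exact prod_mono Ioc_subset_Icc_self Ioc_subset_Icc_self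

theorem key_abstract {g V : Type*} [NormedAddCommGroup g] [NormedSpace ℝ g]
    [FiniteDimensional ℝ g] [NormedAddCommGroup V] [NormedSpace ℝ V] [FiniteDimensional ℝ V]
    (B : g →ₗ[ℝ] g →ₗ[ℝ] g) (x : g)
    (a b c d : ℝ → ℝ → g) (S : ℝ → ℝ → (g →L[ℝ] g))
    (ca : Continuous (Function.uncurry a)) (cb : Continuous (Function.uncurry b))
    (cc : Continuous (Function.uncurry c)) (cd : Continuous (Function.uncurry d))
    (cS : Continuous (Function.uncurry S))
    (hSt : ∀ s ∈ Icc (0:ℝ) 1, ∀ t ∈ Icc (0:ℝ) 1,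
      HasDerivWithinAt (fun t => S s t) (-((adL B (b s t)).comp (S s t))) (Icc (0:ℝ) 1) t)
    (hSs : ∀ s ∈ Icc (0:ℝ) 1, ∀ t ∈ Icc (0:ℝ) 1,
      HasDerivWithinAt (fun s => S s t) (-((adL B (a s t)).comp (S s t))) (Icc (0:ℝ) 1) s)
    (hat : ∀ s ∈ Icc (0:ℝ) 1, ∀ t ∈ Icc (0:ℝ) 1,
      HasDerivWithinAt (fun t => a s t) (c s t) (Icc (0:ℝ) 1) t)
    (hbs : ∀ s ∈ Icc (0:ℝ) 1, ∀ t ∈ Icc (0:ℝ) 1,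
      HasDerivWithinAt (fun s => b s t) (d s t) (Icc (0:ℝ) 1) s)
    (hcd : ∀ s ∈ Icc (0:ℝ) 1, ∀ t ∈ Icc (0:ℝ) 1, c s t - d s t = B (a s t) (b s t))
    (ha0 : ∀ s ∈ Icc (0:ℝ) 1, a s 0 = 0) (ha1 : ∀ s ∈ Icc (0:ℝ) 1, a s 1 = 0)
    (hb0 : ∀ t ∈ Icc (0:ℝ) 1, b 0 t = 0) (hb1 : ∀ t ∈ Icc (0:ℝ) 1, b 1 t = x)
    (M Th : g →L[ℝ] V →L[ℝ] V) (D : V →L[ℝ] V) (R : ℝ → ℝ → V →L[ℝ] V) (v0 : V)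
    (hind : ∀ P : V → Prop, (P v0) → (∀ u v, P u → P v → P (u + v)) →
      (∀ (r : ℝ) u, P u → P (r • u)) → (∀ y u, P u → P (M y u)) → ∀ v, P v)
    (hDM : ∀ y v, D (M y v) = Th y v - M y (D v))
    (hThM : ∀ y z v, Th y (M z v) = M (B y z) v + M z (Th y v))
    (hMM : ∀ y z v, M y (M z v) = - M z (M y v))
    (hTh0 : ∀ y, Th y v0 = 0) (hD0 : D v0 = 0)
    (hR0 : ∀ s t, R s t v0 = v0)
    (hRM : ∀ s t y v, R s t (M y v) = M (S s t y) (R s t v))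
    (hRx : ∀ s ∈ Icc (0:ℝ) 1, ∀ t ∈ Icc (0:ℝ) 1, S s t x = x)
    (hRD : ∀ s ∈ Icc (0:ℝ) 1, ∀ t ∈ Icc (0:ℝ) 1, ∀ v, D (R s t v) = R s t (D v))
    (hR1 : ∀ t ∈ Icc (0:ℝ) 1, ∀ v, R 1 t v = v) :
    ∃ w : ℕ → V, w 0 = v0 ∧ (∀ n : ℕ, D (w (n + 1)) = - ((n + 1 : ℝ) • M x (w n))) ∧
      ∀ W : ℕ → Submodule ℝ V, v0 ∈ W 0 → (∀ n y v, v ∈ W n → M y v ∈ W (n + 1)) →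
        (∀ n s t v, v ∈ W n → R s t v ∈ W n) → ∀ n, w n ∈ W (2 * n) := by
  have cR : ∀ v, Continuous (fun p : ℝ × ℝ => R p.1 p.2 v) := by
    refine hind _ ?_ ?_ ?_ ?_
    · simp only [hR0]; exact continuous_const
    · intro u v hu hv; simp only [map_add]; exact hu.add hv
    · intro r u hu; simp only [map_smul]; exact hu.const_smul r
    · intro y u hu
      simp only [hRM]
      have : Continuous (fun p : ℝ × ℝ => S p.1 p.2) := cS
      fun_prop
  have dRt : ∀ v, ∀ s ∈ Icc (0:ℝ) 1, ∀ t ∈ Icc (0:ℝ) 1,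
      HasDerivWithinAt (fun t => R s t v) (-(Th (b s t) (R s t v))) (Icc (0:ℝ) 1) t := by
    intro v s hs t ht
    refine hind (fun v => HasDerivWithinAt (fun t => R s t v) (-(Th (b s t) (R s t v)))
      (Icc (0:ℝ) 1) t) ?_ ?_ ?_ ?_ v
    · simp only [hR0, hTh0, neg_zero]; exact hasDerivWithinAt_const _ _ _
    · intro u v hu hv; simp only [map_add, neg_add]; exact hu.add hv
    · intro r u hu; simp only [map_smul, ← smul_neg]; exact hu.const_smul r
    · intro y u hu
      simp only [hRM, hThM]
      have h1 := (hSt s hs t ht).clm_apply (hasDerivWithinAt_const t (Icc (0:ℝ) 1) y)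
      have h2 := (M.hasFDerivAt.comp_hasDerivWithinAt t h1).clm_apply hu
      refine h2.congr_deriv ?_
      simp [adL]; abel
  have dRs : ∀ v, ∀ s ∈ Icc (0:ℝ) 1, ∀ t ∈ Icc (0:ℝ) 1,
      HasDerivWithinAt (fun s => R s t v) (-(Th (a s t) (R s t v))) (Icc (0:ℝ) 1) s := by
    intro v s hs t ht
    refine hind (fun v => HasDerivWithinAt (fun s => R s t v) (-(Th (a s t) (R s t v)))
      (Icc (0:ℝ) 1) s) ?_ ?_ ?_ ?_ v
    · simp only [hR0, hTh0, neg_zero]; exact hasDerivWithinAt_const _ _ _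
    · intro u v hu hv; simp only [map_add, neg_add]; exact hu.add hv
    · intro r u hu; simp only [map_smul, ← smul_neg]; exact hu.const_smul r
    · intro y u hu
      simp only [hRM, hThM]
      have h1 := (hSs s hs t ht).clm_apply (hasDerivWithinAt_const s (Icc (0:ℝ) 1) y)
      have h2 := (M.hasFDerivAt.comp_hasDerivWithinAt s h1).clm_apply hu
      refine h2.congr_deriv ?_
      simp [adL]; abel
  have ca' : Continuous (fun p : ℝ × ℝ => a p.1 p.2) := ca
  have cb' : Continuous (fun p : ℝ × ℝ => b p.1 p.2) := cb
  have cc' : Continuous (fun p : ℝ × ℝ => c p.1 p.2) := cc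
  have cd' : Continuous (fun p : ℝ × ℝ => d p.1 p.2) := cd
  let I2 : (ℝ → ℝ → V) → V := fun F => ∫ s in (0:ℝ)..1, ∫ t in (0:ℝ)..1, F s t
  have I2_def : ∀ F, I2 F = ∫ s in (0:ℝ)..1, ∫ t in (0:ℝ)..1, F s t := fun F => rfl
  have I2_congr : ∀ F G : ℝ → ℝ → V, (∀ s ∈ Icc (0:ℝ) 1, ∀ t ∈ Icc (0:ℝ) 1, F s t = G s t) →
      I2 F = I2 G := by
    intro F G h
    exact integral_congr_unit fun s hs => integral_congr_unit fun t ht => h s hs t ht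
  have csec : ∀ F : ℝ → ℝ → V, Continuous (fun p : ℝ × ℝ => F p.1 p.2) → ∀ s,
      Continuous (F s) := by
    intro F hF s
    exact hF.comp (Continuous.prodMk_right s)
  have cint : ∀ F : ℝ → ℝ → V, Continuous (fun p : ℝ × ℝ => F p.1 p.2) →
      Continuous (fun s => ∫ t in (0:ℝ)..1, F s t) := by
    intro F hF
    exact intervalIntegral.continuous_parametric_intervalIntegral_of_continuous' hF 0 1
  have I2_clm : ∀ (T : V →L[ℝ] V) (F : ℝ → ℝ → V), Continuous (fun p : ℝ × ℝ => F p.1 p.2) →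
      T (I2 F) = I2 (fun s t => T (F s t)) := by
    intro T F hF
    simp only [I2_def]
    rw [← T.intervalIntegral_comp_comm ((cint F hF).intervalIntegrable _ _)]
    refine integral_congr_unit fun s hs => ?_
    rw [← T.intervalIntegral_comp_comm ((csec F hF s).intervalIntegrable _ _)]
  have I2_add : ∀ F G : ℝ → ℝ → V, Continuous (fun p : ℝ × ℝ => F p.1 p.2) →
      Continuous (fun p : ℝ × ℝ => G p.1 p.2) →
      I2 (fun s t => F s t + G s t) = I2 F + I2 G := by
    intro F G hF hG
    simp only [I2_def]
    rw [← intervalIntegral.integral_add ((cint F hF).intervalIntegrable _ _)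
      ((cint G hG).intervalIntegrable _ _)]
    refine integral_congr_unit fun s hs => ?_
    rw [← intervalIntegral.integral_add ((csec F hF s).intervalIntegrable _ _)
      ((csec G hG s).intervalIntegrable _ _)]
  have I2_sub : ∀ F G : ℝ → ℝ → V, Continuous (fun p : ℝ × ℝ => F p.1 p.2) →
      Continuous (fun p : ℝ × ℝ => G p.1 p.2) →
      I2 (fun s t => F s t - G s t) = I2 F - I2 G := by
    intro F G hF hG
    simp only [I2_def]
    rw [← intervalIntegral.integral_sub ((cint F hF).intervalIntegrable _ _)
      ((cint G hG).intervalIntegrable _ _)]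
    refine integral_congr_unit fun s hs => ?_
    rw [← intervalIntegral.integral_sub ((csec F hF s).intervalIntegrable _ _)
      ((csec G hG s).intervalIntegrable _ _)]
  have I2_mem : ∀ (W : Submodule ℝ V) (F : ℝ → ℝ → V),
      Continuous (fun p : ℝ × ℝ => F p.1 p.2) → (∀ s t, F s t ∈ W) → I2 F ∈ W := by
    intro W F hF hW
    by_contra hcon
    obtain ⟨f, hf, hle⟩ := W.exists_le_ker_of_notMem hcon
    have := I2_clm (f.smulRight (I2 F)).toContinuousLinearMap F hF
    have h2 : (fun s t => (f.smulRight (I2 F)).toContinuousLinearMap (F s t)) = fun _ _ => 0 := by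
      funext s t
      have := LinearMap.mem_ker.1 (hle (hW s t))
      simp [this]
    rw [h2] at this
    have h3 : f (I2 F) • I2 F = 0 := by
      refine Eq.trans ?_ (this.trans ?_)
      · simp
      · simp [I2_def]
    rcases smul_eq_zero.1 h3 with h | h
    · exact hf h
    · exact hf (by rw [h, map_zero])
  let K : V → ℝ → ℝ → V := fun w s t => M (a s t) (M (b s t) (R s t w))
  have cK : ∀ w, Continuous (fun p : ℝ × ℝ => K w p.1 p.2) := by
    intro w
    have := cR w
    change Continuous (fun p : ℝ × ℝ => M (a p.1 p.2) (M (b p.1 p.2) (R p.1 p.2 w)))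
    fun_prop
  let Φ : V → V := fun w => I2 (K w)
  have main : ∀ w, D (Φ w) = I2 (K (D w)) - M x w := by
    intro w
    have cw := cR w
    let Ft : ℝ → ℝ → V := fun s t => M (c s t) (R s t w) - M (a s t) (Th (b s t) (R s t w))
    let Gs : ℝ → ℝ → V := fun s t => M (d s t) (R s t w) - M (b s t) (Th (a s t) (R s t w))
    have cF : Continuous (fun p : ℝ × ℝ => Ft p.1 p.2) := by
      change Continuous (fun p : ℝ × ℝ => M (c p.1 p.2) (R p.1 p.2 w) -
        M (a p.1 p.2) (Th (b p.1 p.2) (R p.1 p.2 w)))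
      fun_prop
    have cG : Continuous (fun p : ℝ × ℝ => Gs p.1 p.2) := by
      change Continuous (fun p : ℝ × ℝ => M (d p.1 p.2) (R p.1 p.2 w) -
        M (b p.1 p.2) (Th (a p.1 p.2) (R p.1 p.2 w)))
      fun_prop
    have e1 : D (Φ w) = I2 (fun s t => (K (D w) s t + Ft s t) - Gs s t) := by
      refine (I2_clm D (K w) (cK w)).trans (I2_congr _ _ fun s hs t ht => ?_)
      simp only [K, Ft, Gs, hDM, hThM, map_sub, ← hcd s hs t ht, ← hRD s hs t ht]
      simp only [map_sub, sub_apply]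
      abel
    have eF : I2 Ft = 0 := by
      have : I2 Ft = ∫ s in (0:ℝ)..1, (0 : V) := by
        refine integral_congr_unit fun s hs => ?_
        have := ftc_unit (F := fun t => M (a s t) (R s t w)) (F' := Ft s) (fun t ht => ?_)
          (csec Ft cF s).continuousOn
        · rw [this]; simp [ha0 s hs, ha1 s hs]
        · refine ((M.hasFDerivAt.comp_hasDerivWithinAt t (hat s hs t ht)).clm_apply
            (dRt w s hs t ht)).congr_deriv ?_
          simp [Ft, sub_eq_add_neg]
      rw [this]; simp
    have eG : I2 Gs = M x w := by
      have h0 : I2 Gs = ∫ t in (0:ℝ)..1, ∫ s in (0:ℝ)..1, Gs s t := swap_unit cG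
      have : I2 Gs = ∫ t in (0:ℝ)..1, M x w := by
        rw [h0]
        refine integral_congr_unit fun t ht => ?_
        have := ftc_unit (F := fun s => M (b s t) (R s t w)) (F' := fun s => Gs s t)
          (fun s hs => ?_) (cG.comp (Continuous.prodMk_left t)).continuousOn
        · rw [this]; simp [hb0 t ht, hb1 t ht, hR1 t ht]
        · refine ((M.hasFDerivAt.comp_hasDerivWithinAt s (hbs s hs t ht)).clm_apply
            (dRs w s hs t ht)).congr_deriv ?_
          simp [Gs, sub_eq_add_neg]
      rw [this]; simp
    rw [e1, I2_sub _ _ ((cK (D w)).add cF) cG, I2_add _ _ (cK (D w)) cF, eF, eG, add_zero]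
  have hMx : ∀ w, I2 (K (M x w)) = M x (Φ w) := by
    intro w
    refine Eq.trans (I2_congr _ _ fun s hs t ht => ?_) (I2_clm (M x) (K w) (cK w)).symm
    simp only [K, hRM, hRx s hs t ht]
    rw [hMM (b s t) x, map_neg, hMM (a s t) x, neg_neg]
  have hKsmul : ∀ (r : ℝ) w, I2 (K (r • w)) = r • I2 (K w) := by
    intro r w
    have := I2_clm (r • ContinuousLinearMap.id ℝ V) (K w) (cK w)
    simp only [smul_apply, ContinuousLinearMap.id_apply] at this
    rw [this]
    refine I2_congr _ _ fun s hs t ht => ?_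
    simp [K]
  refine ⟨fun n => Φ^[n] v0, rfl, ?_, ?_⟩
  · intro n
    induction n with
    | zero =>
      simp only [Function.iterate_succ', Function.comp, Function.iterate_zero, id]
      rw [main, hD0]
      have := hKsmul 0 0
      simp only [zero_smul] at this
      rw [this]; simp
    | succ n ih =>
      beta_reduce at ih ⊢
      rw [Function.iterate_succ', Function.comp, main, ih, ← neg_smul, hKsmul, hMx]
      rw [Function.iterate_succ', Function.comp]
      push_cast
      module
  · intro W h0 hM hR n
    induction n with
    | zero => exact h0
    | succ n ih =>
      beta_reduce at ih ⊢
      rw [Function.iterate_succ', Function.comp]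
      refine I2_mem _ _ (cK _) fun s t => ?_
      exact hM _ _ _ (hM _ _ _ (hR _ _ _ _ ih))

end KeyAnalysis

section KeyPeriod

open Set MeasureTheory

noncomputable def conjCLM {L V : Type*} [AddCommGroup L] [Module ℝ L]
    [NormedAddCommGroup V] [NormedSpace ℝ V] [FiniteDimensional ℝ V]
    (e : L ≃ₗ[ℝ] V) (T : L →ₗ[ℝ] L) : V →L[ℝ] V :=
  LinearMap.toContinuousLinearMap (e.conj T)

theorem conjCLM_apply {L V : Type*} [AddCommGroup L] [Module ℝ L]
    [NormedAddCommGroup V] [NormedSpace ℝ V] [FiniteDimensional ℝ V]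
    (e : L ≃ₗ[ℝ] V) (T : L →ₗ[ℝ] L) (v : V) : conjCLM e T v = e (T (e.symm v)) := rfl

noncomputable def conjCLM₂ {g L V : Type*} [NormedAddCommGroup g] [NormedSpace ℝ g]
    [FiniteDimensional ℝ g] [AddCommGroup L] [Module ℝ L]
    [NormedAddCommGroup V] [NormedSpace ℝ V] [FiniteDimensional ℝ V]
    (e : L ≃ₗ[ℝ] V) (T : g →ₗ[ℝ] L →ₗ[ℝ] L) : g →L[ℝ] V →L[ℝ] V :=
  LinearMap.toContinuousLinearMap
    ({ toFun := fun y => conjCLM e (T y)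
       map_add' := by intro x y; ext v; simp [conjCLM_apply]
       map_smul' := by intro r y; ext v; simp [conjCLM_apply] } : g →ₗ[ℝ] V →L[ℝ] V)

theorem conjCLM₂_apply {g L V : Type*} [NormedAddCommGroup g] [NormedSpace ℝ g]
    [FiniteDimensional ℝ g] [AddCommGroup L] [Module ℝ L]
    [NormedAddCommGroup V] [NormedSpace ℝ V] [FiniteDimensional ℝ V]
    (e : L ≃ₗ[ℝ] V) (T : g →ₗ[ℝ] L →ₗ[ℝ] L) (y : g) (v : V) :
    conjCLM₂ e T y v = e (T y (e.symm v)) := rfl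

theorem key_period {g : Type*} [NormedAddCommGroup g] [NormedSpace ℝ g]
    [FiniteDimensional ℝ g]
    (B : g →ₗ[ℝ] g →ₗ[ℝ] g) (hB : IsLieBracket B) (x : g) (hx : ∀ y, B x y = 0)
    (a b c d : ℝ → ℝ → g) (S : ℝ → ℝ → (g →L[ℝ] g))
    (ca : Continuous (Function.uncurry a)) (cb : Continuous (Function.uncurry b))
    (cc : Continuous (Function.uncurry c)) (cd : Continuous (Function.uncurry d))
    (cS : Continuous (Function.uncurry S))
    (hSt : ∀ s ∈ Icc (0:ℝ) 1, ∀ t ∈ Icc (0:ℝ) 1,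
      HasDerivWithinAt (fun t => S s t) (-((adL B (b s t)).comp (S s t))) (Icc (0:ℝ) 1) t)
    (hSs : ∀ s ∈ Icc (0:ℝ) 1, ∀ t ∈ Icc (0:ℝ) 1,
      HasDerivWithinAt (fun s => S s t) (-((adL B (a s t)).comp (S s t))) (Icc (0:ℝ) 1) s)
    (hat : ∀ s ∈ Icc (0:ℝ) 1, ∀ t ∈ Icc (0:ℝ) 1,
      HasDerivWithinAt (fun t => a s t) (c s t) (Icc (0:ℝ) 1) t)
    (hbs : ∀ s ∈ Icc (0:ℝ) 1, ∀ t ∈ Icc (0:ℝ) 1,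
      HasDerivWithinAt (fun s => b s t) (d s t) (Icc (0:ℝ) 1) s)
    (hcd : ∀ s ∈ Icc (0:ℝ) 1, ∀ t ∈ Icc (0:ℝ) 1, c s t - d s t = B (a s t) (b s t))
    (ha0 : ∀ s ∈ Icc (0:ℝ) 1, a s 0 = 0) (ha1 : ∀ s ∈ Icc (0:ℝ) 1, a s 1 = 0)
    (hb0 : ∀ t ∈ Icc (0:ℝ) 1, b 0 t = 0) (hb1 : ∀ t ∈ Icc (0:ℝ) 1, b 1 t = x)
    (hSB : ∀ s ∈ Icc (0:ℝ) 1, ∀ t ∈ Icc (0:ℝ) 1, ∀ y z,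
      S s t (B y z) = B (S s t y) (S s t z))
    (hSx : ∀ s ∈ Icc (0:ℝ) 1, ∀ t ∈ Icc (0:ℝ) 1, S s t x = x)
    (hS1 : ∀ t ∈ Icc (0:ℝ) 1, S 1 t = 1) : x = 0 := by
  obtain ⟨hB0, hJ⟩ := hB
  have := ext_finite (g := g)
  let e : ExteriorAlgebra ℝ g ≃ₗ[ℝ] (Fin (Module.finrank ℝ (ExteriorAlgebra ℝ g)) → ℝ) :=
    (Module.finBasis ℝ (ExteriorAlgebra ℝ g)).equivFun
  obtain ⟨w, hw0, hw, hW⟩ := key_abstract B x a b c d S ca cb cc cd cS hSt hSs hat hbs hcd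
    ha0 ha1 hb0 hb1
    (conjCLM₂ e ((LinearMap.mul ℝ (ExteriorAlgebra ℝ g)).comp (ExteriorAlgebra.ι ℝ)))
    (conjCLM₂ e (ceTheta B)) (conjCLM e (ceD B hB0))
    (fun s t => conjCLM e (ExteriorAlgebra.map (S s t : g →ₗ[ℝ] g)).toLinearMap) (e 1)
    (by
      intro P h0 ha hs hm v
      obtain ⟨u, rfl⟩ := e.surjective v
      induction u using ext_left_induction with
      | h0 r =>
        rw [Algebra.algebraMap_eq_smul_one, map_smul]; exact hs _ _ h0
      | hadd x y hx hy => rw [map_add]; exact ha _ _ hx hy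
      | hmul m y hy =>
        have := hm m _ hy
        rwa [conjCLM₂_apply, e.symm_apply_apply] at this)
    (by intro y v; simp [conjCLM₂_apply, conjCLM_apply, ceD_mul])
    (by intro y z v; simp [conjCLM₂_apply, ceTheta_mul])
    (by intro y z v
        simp only [conjCLM₂_apply, e.symm_apply_apply]
        rw [← map_neg]; exact congrArg e (ce_anti _ _ _))
    (by intro y
        have := ceTheta_alg B y 1
        rw [map_one] at this
        simp [conjCLM₂_apply, this])
    (by have := ceD_alg B hB0 1
        rw [map_one] at this
        simp [conjCLM_apply, this])
    (by intro s t; simp [conjCLM_apply])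
    (by intro s t y v; simp [conjCLM_apply, conjCLM₂_apply])
    hSx
    (by intro s hs t ht v
        simp only [conjCLM_apply, e.symm_apply_apply]
        exact congrArg e (ceD_map B hB0 _ (hSB s hs t ht) _))
    (by intro t ht v
        simp only [conjCLM_apply, hS1 t ht]
        have : ((1 : g →L[ℝ] g) : g →ₗ[ℝ] g) = LinearMap.id := rfl
        rw [this, ExteriorAlgebra.map_id]
        simp)
  have hdeg := hW (fun n => (LinearMap.range (ExteriorAlgebra.ι ℝ : g →ₗ[ℝ] _) ^ n).map
      (e : _ →ₗ[ℝ] _))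
    (by simp)
    (by
      rintro n y _ ⟨v, hv, rfl⟩
      refine ⟨ExteriorAlgebra.ι ℝ y * v, ?_, ?_⟩
      · rw [pow_succ']
        exact Submodule.mul_mem_mul (LinearMap.mem_range_self _ y) hv
      · simp [conjCLM₂_apply])
    (by
      rintro n s t _ ⟨v, hv, rfl⟩
      refine ⟨ExteriorAlgebra.map (S s t : g →ₗ[ℝ] g) v, ?_, ?_⟩
      · have := Submodule.mem_map_of_mem
          (f := (ExteriorAlgebra.map (S s t : g →ₗ[ℝ] g)).toLinearMap) hv
        rw [Submodule.map_pow] at this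
        have hle : (LinearMap.range (ExteriorAlgebra.ι ℝ : g →ₗ[ℝ] _)).map
            (ExteriorAlgebra.map (S s t : g →ₗ[ℝ] g)).toLinearMap ≤
            LinearMap.range (ExteriorAlgebra.ι ℝ : g →ₗ[ℝ] _) := by
          rintro _ ⟨_, ⟨y, rfl⟩, rfl⟩
          exact ⟨S s t y, by simp⟩
        exact (pow_le_pow_left' hle n) this
      · simp [conjCLM_apply])
  refine ce_key B hB0 hJ x hx (fun n => e.symm (w n)) (by simp [hw0]) ?_
    (Module.finrank ℝ g + 1) ?_
  · intro n
    have := congrArg e.symm (hw n)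
    simpa [conjCLM_apply, conjCLM₂_apply] using this
  · obtain ⟨v, hv, hv2⟩ := hdeg (Module.finrank ℝ g + 1)
    have := ext_power_zero _ (by omega) v hv
    rw [← hv2, this]; simp

end KeyPeriod

section PathTools

open Set MeasureTheory

local notation "II" => (Set.Icc (0:ℝ) 1)

/-- Pointwise application of a continuous bilinear map to continuous paths. -/
noncomputable def bilC {E F G : Type*} [NormedAddCommGroup E] [NormedSpace ℝ E]
    [NormedAddCommGroup F] [NormedSpace ℝ F] [NormedAddCommGroup G] [NormedSpace ℝ G]
    (b : E →L[ℝ] F →L[ℝ] G) : C(II, E) →L[ℝ] C(II, F) →L[ℝ] C(II, G) :=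
  LinearMap.mkContinuous₂
    (LinearMap.mk₂ ℝ (fun (f : C(II, E)) (h : C(II, F)) =>
      (⟨fun t => b (f t) (h t), by fun_prop⟩ : C(II, G)))
      (by intros; ext; simp) (by intros; ext; simp) (by intros; ext; simp)
      (by intros; ext; simp)) ‖b‖ (by
      intro f h
      refine (ContinuousMap.norm_le _ (by positivity)).2 fun t => ?_
      refine (b.le_opNorm₂ (f t) (h t)).trans ?_
      gcongr
      · exact f.norm_coe_le_norm t
      · exact h.norm_coe_le_norm t)

theorem bilC_apply {E F G : Type*} [NormedAddCommGroup E] [NormedSpace ℝ E]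
    [NormedAddCommGroup F] [NormedSpace ℝ F] [NormedAddCommGroup G] [NormedSpace ℝ G]
    (b : E →L[ℝ] F →L[ℝ] G) (f : C(II, E)) (h : C(II, F)) (t : II) :
    bilC b f h t = b (f t) (h t) := rfl

theorem pathExt_continuous {E : Type*} [TopologicalSpace E] (f : C(II, E)) :
    Continuous (pathExt f) := f.continuous.Icc_extend'

theorem pathExt_apply {E : Type*} [TopologicalSpace E] (f : C(II, E)) (t : ℝ) (ht : t ∈ II) :
    pathExt f t = f ⟨t, ht⟩ := IccExtend_of_mem _ _ ht

theorem pathExt_coe {E : Type*} [TopologicalSpace E] (f : C(II, E)) (t : II) :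
    pathExt f t = f t := IccExtend_val _ _ t

theorem pathExt_norm_le {E : Type*} [NormedAddCommGroup E] (f : C(II, E)) (t : ℝ) :
    ‖pathExt f t‖ ≤ ‖f‖ := f.norm_coe_le_norm _

/-- Integration of paths from `0`. -/
noncomputable def integ {E : Type*} [NormedAddCommGroup E] [NormedSpace ℝ E] [CompleteSpace E] :
    C(II, E) →L[ℝ] C(II, E) :=
  LinearMap.mkContinuous
    { toFun := fun f => ⟨fun t => ∫ u in (0:ℝ)..t, pathExt f u,
        (intervalIntegral.continuous_primitive
          (fun a b => (pathExt_continuous f).intervalIntegrable a b) 0).comp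
          continuous_subtype_val⟩
      map_add' := by
        intro f h; ext t
        exact intervalIntegral.integral_add
          ((pathExt_continuous f).intervalIntegrable _ _)
          ((pathExt_continuous h).intervalIntegrable _ _)
      map_smul' := by
        intro r f; ext t
        exact intervalIntegral.integral_smul r (pathExt f) } 1 (by
    intro f
    refine (ContinuousMap.norm_le _ (by positivity)).2 fun t => ?_
    have := intervalIntegral.norm_integral_le_of_norm_le_const (a := 0) (b := (t:ℝ))
      (f := pathExt f) (C := ‖f‖) (fun x _ => pathExt_norm_le f x)
    refine this.trans ?_
    rw [sub_zero, abs_of_nonneg t.2.1, mul_comm]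
    exact mul_le_mul_of_nonneg_right t.2.2 (norm_nonneg _))

theorem integ_apply {E : Type*} [NormedAddCommGroup E] [NormedSpace ℝ E] [CompleteSpace E]
    (f : C(II, E)) (t : II) : integ f t = ∫ u in (0:ℝ)..t, pathExt f u := rfl

theorem integ_deriv {E : Type*} [NormedAddCommGroup E] [NormedSpace ℝ E] [CompleteSpace E]
    (f : C(II, E)) (t : ℝ) (ht : t ∈ II) :
    HasDerivWithinAt (pathExt (integ f)) (pathExt f t) II t := by
  have h : HasDerivAt (fun t => ∫ u in (0:ℝ)..t, pathExt f u) (pathExt f t) t :=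
    intervalIntegral.integral_hasDerivAt_right ((pathExt_continuous f).intervalIntegrable _ _)
      ((pathExt_continuous f).stronglyMeasurableAtFilter _ _) (pathExt_continuous f).continuousAt
  refine h.hasDerivWithinAt.congr (fun u hu => ?_) ?_
  · rw [pathExt_apply _ u hu]; rfl
  · rw [pathExt_apply _ t ht]; rfl

theorem integ_zero {E : Type*} [NormedAddCommGroup E] [NormedSpace ℝ E] [CompleteSpace E]
    (f : C(II, E)) : integ f ⟨0, by simp⟩ = 0 := by
  rw [integ_apply]; simp

theorem integ_unique {E : Type*} [NormedAddCommGroup E] [NormedSpace ℝ E] [CompleteSpace E]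
    (f F : C(II, E)) (hF : ∀ t ∈ II, HasDerivWithinAt (pathExt F) (pathExt f t) II t) (t : II) :
    F t = F ⟨0, by simp⟩ + integ f t := by
  have h0 : (0:ℝ) ∈ II := by simp
  have := intervalIntegral.integral_eq_sub_of_hasDerivAt_of_le (f := pathExt F)
    (f' := pathExt f) t.2.1 (pathExt_continuous F).continuousOn (fun u hu =>
      (hF u ⟨hu.1.le, hu.2.le.trans t.2.2⟩).hasDerivAt
        (Icc_mem_nhds hu.1 (hu.2.trans_le t.2.2)))
    ((pathExt_continuous f).intervalIntegrable _ _)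
  rw [integ_apply, this, pathExt_coe, pathExt_apply F 0 h0]; abel

theorem volterra_bound {E F : Type*} [NormedAddCommGroup E] [NormedSpace ℝ E]
    [NormedAddCommGroup F] [NormedSpace ℝ F] [CompleteSpace F]
    (b : E →L[ℝ] F →L[ℝ] F) (γ : C(II, E)) (f : C(II, F)) (n : ℕ) (t : II) :
    ‖((integ.comp (bilC b γ)) ^ n) f t‖ ≤
      (‖b‖ * ‖γ‖) ^ n * (t:ℝ) ^ n / n.factorial * ‖f‖ := by
  induction n generalizing t with
  | zero => simpa using f.norm_coe_le_norm t
  | succ n ih =>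
    rw [pow_succ']
    set h := ((integ.comp (bilC b γ)) ^ n) f with hh
    change ‖integ (bilC b γ h) t‖ ≤ _
    rw [integ_apply]
    have h1 : ∀ u ∈ Set.Ioc (0:ℝ) t, ‖pathExt (bilC b γ h) u‖ ≤
        (‖b‖ * ‖γ‖) ^ (n+1) / n.factorial * ‖f‖ * u ^ n := by
      intro u hu
      have hu' : u ∈ II := ⟨hu.1.le, hu.2.trans t.2.2⟩
      rw [pathExt_apply _ u hu', bilC_apply]
      refine (b.le_opNorm₂ _ _).trans ?_
      calc ‖b‖ * ‖γ ⟨u, hu'⟩‖ * ‖h ⟨u, hu'⟩‖ ≤ ‖b‖ * ‖γ‖ *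
            ((‖b‖ * ‖γ‖) ^ n * u ^ n / n.factorial * ‖f‖) := by
              gcongr
              · exact γ.norm_coe_le_norm _
              · exact ih ⟨u, hu'⟩
        _ = _ := by ring
    have h2 := intervalIntegral.norm_integral_le_of_norm_le (f := pathExt (bilC b γ h))
      (g := fun u => (‖b‖ * ‖γ‖) ^ (n+1) / n.factorial * ‖f‖ * u ^ n) (μ := volume)
      t.2.1 (Filter.Eventually.of_forall h1)
      ((by fun_prop : Continuous fun u : ℝ => (‖b‖ * ‖γ‖) ^ (n+1) / n.factorial * ‖f‖ * u ^ n).intervalIntegrable _ _)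
    refine h2.trans (le_of_eq ?_)
    rw [intervalIntegral.integral_const_mul, integral_pow, Nat.factorial_succ]
    have := Nat.factorial_pos n
    push_cast
    field_simp
    simp

theorem volterra_isUnit {E F : Type*} [NormedAddCommGroup E] [NormedSpace ℝ E]
    [NormedAddCommGroup F] [NormedSpace ℝ F] [CompleteSpace F]
    (b : E →L[ℝ] F →L[ℝ] F) (γ : C(II, E)) :
    IsUnit (1 - integ.comp (bilC b γ) : C(II, F) →L[ℝ] C(II, F)) := by
  set T : C(II, F) →L[ℝ] C(II, F) := integ.comp (bilC b γ) with hT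
  obtain ⟨n, hn⟩ : ∃ n : ℕ, (‖b‖ * ‖γ‖) ^ n / n.factorial < 1 :=
    ((FloorSemiring.tendsto_pow_div_factorial_atTop (‖b‖ * ‖γ‖)).eventually
      (gt_mem_nhds zero_lt_one)).exists
  have h1 : ‖T ^ n‖ < 1 := by
    refine lt_of_le_of_lt (ContinuousLinearMap.opNorm_le_bound _ (by positivity) fun f => ?_) hn
    refine (ContinuousMap.norm_le _ (by positivity)).2 fun t => ?_
    refine (volterra_bound b γ f n t).trans ?_
    gcongr
    have : (t:ℝ) ^ n ≤ 1 := pow_le_one₀ t.2.1 t.2.2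
    calc _ ≤ (‖b‖ * ‖γ‖) ^ n * 1 := by gcongr
      _ = _ := mul_one _
  have h2 : IsUnit (1 - T ^ n) :=
    isUnit_one_sub_of_norm_lt_one (R := C(II, F) →L[ℝ] C(II, F)) h1
  have c1 : (1 - T) * (∑ i ∈ Finset.range n, T ^ i) = 1 - T ^ n := mul_neg_geom_sum T n
  have c2 : (∑ i ∈ Finset.range n, T ^ i) * (1 - T) = 1 - T ^ n := geom_sum_mul_neg T n
  have hcomm : Commute (1 - T) (∑ i ∈ Finset.range n, T ^ i) := c1.trans c2.symm
  rw [← c1] at h2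
  exact (hcomm.isUnit_mul_iff.1 h2).1

theorem hasDerivWithinAt_ringInverse {R : Type*} [NormedRing R] [NormedAlgebra ℝ R]
    [CompleteSpace R] {f : ℝ → R} {f' : R} {s : Set ℝ} {t : ℝ} (hf : HasDerivWithinAt f f' s t)
    (hu : IsUnit (f t)) :
    HasDerivWithinAt (fun t => Ring.inverse (f t))
      (-(Ring.inverse (f t) * f' * Ring.inverse (f t))) s t := by
  obtain ⟨u, hu⟩ := hu
  have h := hasFDerivAt_ringInverse (𝕜 := ℝ) u
  rw [hu] at h
  have := h.comp_hasDerivWithinAt t hf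
  refine this.congr_deriv ?_
  rw [← hu, Ring.inverse_unit]; simp

noncomputable def volOp {E F : Type*} [NormedAddCommGroup E] [NormedSpace ℝ E]
    [NormedAddCommGroup F] [NormedSpace ℝ F] [CompleteSpace F]
    (b : E →L[ℝ] F →L[ℝ] F) : C(II, E) →L[ℝ] C(II, F) →L[ℝ] C(II, F) :=
  (ContinuousLinearMap.compL ℝ C(II, F) C(II, F) C(II, F) integ).comp (bilC b)

noncomputable def volSol {E F : Type*} [NormedAddCommGroup E] [NormedSpace ℝ E]
    [NormedAddCommGroup F] [NormedSpace ℝ F] [CompleteSpace F]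
    (b : E →L[ℝ] F →L[ℝ] F) (γ : C(II, E)) (f : C(II, F)) : C(II, F) :=
  Ring.inverse (1 - volOp b γ) f

theorem volSol_spec {E F : Type*} [NormedAddCommGroup E] [NormedSpace ℝ E]
    [NormedAddCommGroup F] [NormedSpace ℝ F] [CompleteSpace F]
    (b : E →L[ℝ] F →L[ℝ] F) (γ : C(II, E)) (f : C(II, F)) :
    volSol b γ f = f + integ (bilC b γ (volSol b γ f)) := by
  have := DFunLike.congr_fun (Ring.mul_inverse_cancel _ (volterra_isUnit b γ)) f
  have h : volSol b γ f - integ (bilC b γ (volSol b γ f)) = f := this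
  rw [sub_eq_iff_eq_add] at h
  exact h

theorem volSol_unique {E F : Type*} [NormedAddCommGroup E] [NormedSpace ℝ E]
    [NormedAddCommGroup F] [NormedSpace ℝ F] [CompleteSpace F]
    (b : E →L[ℝ] F →L[ℝ] F) (γ : C(II, E)) (f h : C(II, F))
    (hh : h = f + integ (bilC b γ h)) : volSol b γ f = h := by
  have := DFunLike.congr_fun (Ring.inverse_mul_cancel _ (volterra_isUnit b γ)) h
  have h1 : volSol b γ (h - integ (bilC b γ h)) = h := this
  rwa [← eq_sub_iff_add_eq.2 hh.symm] at h1

theorem volSol_deriv {E F : Type*} [NormedAddCommGroup E] [NormedSpace ℝ E]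
    [NormedAddCommGroup F] [NormedSpace ℝ F] [CompleteSpace F]
    (b : E →L[ℝ] F →L[ℝ] F) (f : C(II, F)) {Γ : ℝ → C(II, E)}
    {Γ' : C(II, E)} {s : ℝ} {J : Set ℝ} (hΓ : HasDerivWithinAt Γ Γ' J s) :
    HasDerivWithinAt (fun s => volSol b (Γ s) f)
      (volSol b (Γ s) (integ (bilC b Γ' (volSol b (Γ s) f)))) J s := by
  have h1 : HasDerivWithinAt (fun s => 1 - volOp b (Γ s)) (-(volOp b Γ')) J s :=
    ((volOp b).hasFDerivAt.comp_hasDerivWithinAt s hΓ).const_sub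
      (1 : C(II, F) →L[ℝ] C(II, F))
  have h2 := (hasDerivWithinAt_ringInverse (R := C(II, F) →L[ℝ] C(II, F)) h1
    (volterra_isUnit b (Γ s))).clm_apply (hasDerivWithinAt_const s J f)
  refine h2.congr_deriv ?_
  simp [volSol]
  rfl

theorem volSol_contDiff {E F : Type*} [NormedAddCommGroup E] [NormedSpace ℝ E]
    [NormedAddCommGroup F] [NormedSpace ℝ F] [CompleteSpace F]
    (b : E →L[ℝ] F →L[ℝ] F) (f : C(II, F)) : ContDiff ℝ 1 (fun γ => volSol b γ f) := by
  rw [contDiff_iff_contDiffAt]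
  intro γ
  obtain ⟨u, hu⟩ := volterra_isUnit b γ
  have h1 : ContDiffAt ℝ 1 (fun γ => Ring.inverse (1 - volOp b γ)) γ := by
    have h2 := contDiffAt_ringInverse ℝ (n := 1) (R := C(II, F) →L[ℝ] C(II, F)) u
    rw [hu] at h2
    have h3 : ContDiffAt ℝ 1 (fun γ => volOp b γ) γ :=
      ContinuousLinearMap.contDiff (𝕜 := ℝ) (E := C(II, E)) (F := C(II, F) →L[ℝ] C(II, F))
        (volOp b) |>.contDiffAt
    exact ContDiffAt.comp γ h2 (contDiffAt_const.sub h3)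
  exact h1.clm_apply contDiffAt_const

theorem lin_ode_bound {F : Type*} [NormedAddCommGroup F] [NormedSpace ℝ F]
    (T : ℝ → F →L[ℝ] F) (hT : Continuous T) :
    ∃ K : NNReal, ∀ t ∈ II, LipschitzWith K (T t) := by
  obtain ⟨C, hC⟩ := isCompact_Icc.exists_bound_of_continuousOn (s := II) hT.continuousOn
  refine ⟨⟨max C 0, le_max_right _ _⟩, fun t ht => ?_⟩
  refine (T t).lipschitz.weaken ?_
  exact (hC t ht).trans (le_max_left _ _)

theorem lin_ode_unique {F : Type*} [NormedAddCommGroup F] [NormedSpace ℝ F]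
    (T : ℝ → F →L[ℝ] F) (hT : Continuous T) (f : ℝ → F)
    (hf : ∀ t ∈ II, HasDerivWithinAt f (T t (f t)) II t) (h0 : f 0 = 0) :
    ∀ t ∈ II, f t = 0 := by
  obtain ⟨K, hK⟩ := lin_ode_bound T hT
  have := ODE_solution_unique_of_mem_Icc_right (v := fun t => T t) (s := fun _ => univ)
    (f := f) (g := fun _ => 0) (K := K) (a := 0) (b := 1)
    (fun t ht => (hK t (Ico_subset_Icc_self ht)).lipschitzOnWith)
    (fun t ht => (hf t ht).continuousWithinAt)
    (fun t ht => (hf t (Ico_subset_Icc_self ht)).mono_of_mem_nhdsWithin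
      (Icc_mem_nhdsGE_of_mem ht)) (fun _ _ => mem_univ _)
    continuousOn_const (fun t ht => by simpa using hasDerivWithinAt_const _ _ _)
    (fun _ _ => mem_univ _) h0
  intro t ht
  exact this ht

theorem lin_ode_unique_left {F : Type*} [NormedAddCommGroup F] [NormedSpace ℝ F]
    (T : ℝ → F →L[ℝ] F) (hT : Continuous T) (f : ℝ → F)
    (hf : ∀ t ∈ II, HasDerivWithinAt f (T t (f t)) II t) (t1 : ℝ) (ht1 : t1 ∈ II)
    (h0 : f t1 = 0) : f 0 = 0 := by
  obtain ⟨K, hK⟩ := lin_ode_bound T hT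
  have hsub : Icc 0 t1 ⊆ II := Icc_subset_Icc_right ht1.2
  have := ODE_solution_unique_of_mem_Icc_left (v := fun t => T t) (s := fun _ => univ)
    (f := f) (g := fun _ => 0) (K := K) (a := 0) (b := t1)
    (fun t ht => (hK t (hsub (Ioc_subset_Icc_self ht))).lipschitzOnWith)
    (fun t ht => ((hf t (hsub ht)).mono hsub).continuousWithinAt)
    (fun t ht => (hf t (hsub (Ioc_subset_Icc_self ht))).mono_of_mem_nhdsWithin
      (Icc_mem_nhdsLE_of_mem ⟨ht.1, ht.2.trans ht1.2⟩)) (fun _ _ => mem_univ _)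
    continuousOn_const (fun t ht => by simpa using hasDerivWithinAt_const _ _ _)
    (fun _ _ => mem_univ _) h0
  exact this ⟨le_rfl, ht1.1⟩

end PathTools

section Transport

open Set MeasureTheory

set_option synthInstance.maxHeartbeats 200000
set_option linter.unusedSectionVars false

local notation "II" => (Set.Icc (0:ℝ) 1)

variable {g : Type*} [NormedAddCommGroup g] [NormedSpace ℝ g] [FiniteDimensional ℝ g]

noncomputable def adCL (B : g →ₗ[ℝ] g →ₗ[ℝ] g) : g →L[ℝ] (g →L[ℝ] g) :=
  LinearMap.toContinuousLinearMap
    ({ toFun := fun x => adL B x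
       map_add' := by intro x y; ext v; simp [adL]
       map_smul' := by intro r y; ext v; simp [adL] } : g →ₗ[ℝ] (g →L[ℝ] g))

theorem adCL_apply (B : g →ₗ[ℝ] g →ₗ[ℝ] g) (x y : g) : adCL B x y = B x y := rfl

theorem adCL_eq (B : g →ₗ[ℝ] g →ₗ[ℝ] g) (x : g) : adL B x = adCL B x := rfl

noncomputable def adP (B : g →ₗ[ℝ] g →ₗ[ℝ] g) : C(II, g) →L[ℝ] C(II, g →L[ℝ] g) :=
  (adCL B).compLeftContinuous ℝ II

theorem adP_apply (B : g →ₗ[ℝ] g →ₗ[ℝ] g) (γ : C(II, g)) (t : II) :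
    adP B γ t = adCL B (γ t) := rfl

noncomputable def brP (B : g →ₗ[ℝ] g →ₗ[ℝ] g) : C(II, g) →L[ℝ] C(II, g) →L[ℝ] C(II, g) :=
  bilC (adCL B)

noncomputable def actP : C(II, g →L[ℝ] g) →L[ℝ] C(II, g) →L[ℝ] C(II, g) :=
  bilC (ContinuousLinearMap.id ℝ (g →L[ℝ] g))

theorem actP_apply (A : C(II, g →L[ℝ] g)) (γ : C(II, g)) (t : II) :
    actP A γ t = A t (γ t) := rfl

theorem brP_apply (B : g →ₗ[ℝ] g →ₗ[ℝ] g) (γ δ : C(II, g)) (t : II) :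
    brP B γ δ t = B (γ t) (δ t) := rfl

theorem actP_mul (A A' : C(II, g →L[ℝ] g)) (γ : C(II, g)) :
    actP (A * A') γ = actP A (actP A' γ) := rfl

theorem actP_one (γ : C(II, g)) : actP (1 : C(II, g →L[ℝ] g)) γ = γ := rfl

theorem adP_act (B : g →ₗ[ℝ] g →ₗ[ℝ] g) (γ δ : C(II, g)) : actP (adP B γ) δ = brP B γ δ := rfl

noncomputable def volB (B : g →ₗ[ℝ] g →ₗ[ℝ] g) :
    g →L[ℝ] (g →L[ℝ] g) →L[ℝ] (g →L[ℝ] g) :=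
  (ContinuousLinearMap.mul ℝ (g →L[ℝ] g)).comp (adCL B)

noncomputable def Tr (B : g →ₗ[ℝ] g →ₗ[ℝ] g) (γ : C(II, g)) : C(II, g →L[ℝ] g) :=
  volSol (volB B) γ 1

theorem Tr_eq (B : g →ₗ[ℝ] g →ₗ[ℝ] g) (γ : C(II, g)) :
    Tr B γ = 1 + integ (adP B γ * Tr B γ) :=
  volSol_spec (volB B) γ 1

theorem Tr_zero (B : g →ₗ[ℝ] g →ₗ[ℝ] g) (γ : C(II, g)) : pathExt (Tr B γ) 0 = 1 := by
  rw [pathExt_apply _ 0 (by simp), Tr_eq, ContinuousMap.add_apply, integ_zero, add_zero]; rfl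

theorem Tr_deriv (B : g →ₗ[ℝ] g →ₗ[ℝ] g) (γ : C(II, g)) (t : ℝ) (ht : t ∈ II) :
    HasDerivWithinAt (pathExt (Tr B γ)) (adCL B (pathExt γ t) * pathExt (Tr B γ) t) II t := by
  have h := (integ_deriv (adP B γ * Tr B γ) t ht).const_add (1 : g →L[ℝ] g)
  refine HasDerivWithinAt.congr_deriv (f' := pathExt (adP B γ * Tr B γ) t) (h.congr_of_mem ?_ ht) rfl
  intro u hu
  rw [pathExt_apply _ u hu, pathExt_apply _ u hu]
  exact DFunLike.congr_fun (Tr_eq B γ) _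

theorem Tr_isTransport (B : g →ₗ[ℝ] g →ₗ[ℝ] g) (γ : C(II, g)) :
    IsTransport B (pathExt γ) (pathExt (Tr B γ)) := by
  refine ⟨Tr_zero B γ, fun t ht => Tr_deriv B γ t ht, Continuous.continuousOn ?_⟩
  exact (((adCL B).continuous.comp (pathExt_continuous γ)).clm_comp (pathExt_continuous (Tr B γ)))

theorem transport_unique (B : g →ₗ[ℝ] g →ₗ[ℝ] g) (γ : C(II, g)) (A : ℝ → (g →L[ℝ] g))
    (h0 : A 0 = 1)
    (hA : ∀ t ∈ II, HasDerivWithinAt A (adCL B (pathExt γ t) * A t) II t) :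
    ∀ t ∈ II, A t = pathExt (Tr B γ) t := by
  intro t ht
  rw [← sub_eq_zero]
  refine lin_ode_unique (fun t => volB B (pathExt γ t))
    ((volB B).continuous.comp (pathExt_continuous γ)) (fun t => A t - pathExt (Tr B γ) t)
    (fun t ht => ?_) ?_ t ht
  · refine ((hA t ht).sub (Tr_deriv B γ t ht)).congr_deriv ?_
    rw [map_sub]; rfl
  · simp [h0, Tr_zero]

theorem transport_eq (B : g →ₗ[ℝ] g →ₗ[ℝ] g) (γ : C(II, g)) (t : ℝ) (ht : t ∈ II) :
    transport B (pathExt γ) t = pathExt (Tr B γ) t := by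
  have hex : ∃ A : ℝ → (g →L[ℝ] g), IsTransport B (pathExt γ) A := ⟨_, Tr_isTransport B γ⟩
  have : IsTransport B (pathExt γ) (transport B (pathExt γ)) := by
    unfold transport
    rw [dif_pos hex]
    exact hex.choose_spec
  exact transport_unique B γ _ this.1 this.2.1 t ht

theorem Tr_unique (B : g →ₗ[ℝ] g →ₗ[ℝ] g) (γ : C(II, g)) (A : C(II, g →L[ℝ] g))
    (h0 : pathExt A 0 = 1)
    (hA : ∀ t ∈ II, HasDerivWithinAt (pathExt A) (adCL B (pathExt γ t) * pathExt A t) II t) :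
    A = Tr B γ := by
  ext1 t
  have := transport_unique B γ (pathExt A) h0 hA t t.2
  rwa [pathExt_coe, pathExt_coe] at this

theorem Tr_isUnit_pt (B : g →ₗ[ℝ] g →ₗ[ℝ] g) (γ : C(II, g)) (t : II) : IsUnit (Tr B γ t) := by
  have hinj : Function.Injective (Tr B γ t) := by
    rw [injective_iff_map_eq_zero]
    intro v hv
    have := lin_ode_unique_left (fun t => adCL B (pathExt γ t))
      ((adCL B).continuous.comp (pathExt_continuous γ)) (fun t => pathExt (Tr B γ) t v)
      (fun t ht => ?_) t t.2 (by simpa [pathExt_coe] using hv)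
    · simpa [Tr_zero] using this
    · refine ((Tr_deriv B γ t ht).clm_apply (hasDerivWithinAt_const _ _ v)).congr_deriv ?_
      simp
  let e := LinearEquiv.ofInjectiveEndo (Tr B γ t : g →ₗ[ℝ] g) hinj
  let e' := e.toContinuousLinearEquiv
  refine ⟨⟨Tr B γ t, e'.symm, ?_, ?_⟩, rfl⟩
  · ext v
    exact e'.apply_symm_apply v
  · ext v
    exact e'.symm_apply_apply v

theorem Tr_isUnit (B : g →ₗ[ℝ] g →ₗ[ℝ] g) (γ : C(II, g)) : IsUnit (Tr B γ) :=
  ContinuousMap.isUnit_iff_forall_isUnit (Tr B γ) |>.2 (Tr_isUnit_pt B γ)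

noncomputable def Ti (B : g →ₗ[ℝ] g →ₗ[ℝ] g) (γ : C(II, g)) : C(II, g →L[ℝ] g) :=
  Ring.inverse (Tr B γ)

theorem Ti_mul_Tr (B : g →ₗ[ℝ] g →ₗ[ℝ] g) (γ : C(II, g)) : Ti B γ * Tr B γ = 1 :=
  Ring.inverse_mul_cancel _ (Tr_isUnit B γ)

theorem Tr_mul_Ti (B : g →ₗ[ℝ] g →ₗ[ℝ] g) (γ : C(II, g)) : Tr B γ * Ti B γ = 1 :=
  Ring.mul_inverse_cancel _ (Tr_isUnit B γ)

theorem Ti_apply (B : g →ₗ[ℝ] g →ₗ[ℝ] g) (γ : C(II, g)) (t : II) :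
    Ti B γ t = Ring.inverse (Tr B γ t) := by
  have h1 : Ti B γ t * Tr B γ t = 1 := DFunLike.congr_fun (Ti_mul_Tr B γ) t
  have h2 := Ring.mul_inverse_cancel _ (Tr_isUnit_pt B γ t)
  calc Ti B γ t = Ti B γ t * (Tr B γ t * Ring.inverse (Tr B γ t)) := by rw [h2, mul_one]
    _ = _ := by rw [← mul_assoc, h1, one_mul]

theorem Ti_Tr_apply (B : g →ₗ[ℝ] g →ₗ[ℝ] g) (γ : C(II, g)) (t : II) (v : g) :
    Ti B γ t (Tr B γ t v) = v :=
  DFunLike.congr_fun (DFunLike.congr_fun (Ti_mul_Tr B γ) t) v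

theorem Tr_Ti_apply (B : g →ₗ[ℝ] g →ₗ[ℝ] g) (γ : C(II, g)) (t : II) (v : g) :
    Tr B γ t (Ti B γ t v) = v :=
  DFunLike.congr_fun (DFunLike.congr_fun (Tr_mul_Ti B γ) t) v

theorem Tr_auto (B : g →ₗ[ℝ] g →ₗ[ℝ] g) (hB : IsLieBracket B) (γ : C(II, g)) (t : II) (y z : g) :
    Tr B γ t (B y z) = B (Tr B γ t y) (Tr B γ t z) := by
  have := lin_ode_unique (fun t => adCL B (pathExt γ t))
      ((adCL B).continuous.comp (pathExt_continuous γ))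
      (fun t => pathExt (Tr B γ) t (B y z) - adCL B (pathExt (Tr B γ) t y) (pathExt (Tr B γ) t z))
      (fun t ht => ?_) (by simp [Tr_zero, adCL_apply]) t t.2
  · rw [pathExt_coe, sub_eq_zero] at this
    exact this
  · have h := fun v => (Tr_deriv B γ t ht).clm_apply (hasDerivWithinAt_const _ _ v)
    refine ((h (B y z)).sub
      (((adCL B).hasFDerivAt.comp_hasDerivWithinAt t (h y)).clm_apply (h z))).congr_deriv ?_
    simp [adCL_apply, hB.2 (pathExt γ t) (pathExt (Tr B γ) t y) (pathExt (Tr B γ) t z)]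

theorem Ti_auto (B : g →ₗ[ℝ] g →ₗ[ℝ] g) (hB : IsLieBracket B) (γ : C(II, g)) (t : II) (y z : g) :
    Ti B γ t (B y z) = B (Ti B γ t y) (Ti B γ t z) := by
  have := Tr_auto B hB γ t (Ti B γ t y) (Ti B γ t z)
  rw [Tr_Ti_apply, Tr_Ti_apply] at this
  rw [← this, Ti_Tr_apply]

theorem Tr_adP (B : g →ₗ[ℝ] g →ₗ[ℝ] g) (hB : IsLieBracket B) (γ δ : C(II, g)) :
    Tr B γ * adP B δ = adP B (actP (Tr B γ) δ) * Tr B γ := by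
  ext t v
  exact Tr_auto B hB γ t (δ t) v

theorem Ti_adP (B : g →ₗ[ℝ] g →ₗ[ℝ] g) (hB : IsLieBracket B) (γ δ : C(II, g)) :
    Ti B γ * adP B δ = adP B (actP (Ti B γ) δ) * Ti B γ := by
  ext t v
  exact Ti_auto B hB γ t (δ t) v

theorem Tr_center (B : g →ₗ[ℝ] g →ₗ[ℝ] g) (hB : IsLieBracket B) (γ : C(II, g)) (t : II) (x : g)
    (hx : ∀ y, B x y = 0) : Tr B γ t x = x := by
  have hx' : ∀ y, B y x = 0 := by
    intro y
    have := hB.1 (x + y)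
    simpa [hB.1, hx] using this
  have := lin_ode_unique (fun t => adCL B (pathExt γ t))
      ((adCL B).continuous.comp (pathExt_continuous γ))
      (fun t => pathExt (Tr B γ) t x - x)
      (fun t ht => ?_) (by simp [Tr_zero]) t t.2
  · rw [pathExt_coe, sub_eq_zero] at this
    exact this
  · refine (((Tr_deriv B γ t ht).clm_apply (hasDerivWithinAt_const _ _ x)).sub_const x).congr_deriv ?_
    simp [adCL_apply, hx']

theorem Ti_center (B : g →ₗ[ℝ] g →ₗ[ℝ] g) (hB : IsLieBracket B) (γ : C(II, g)) (t : II) (x : g)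
    (hx : ∀ y, B x y = 0) : Ti B γ t x = x := by
  have := Ti_Tr_apply B γ t x
  rwa [Tr_center B hB γ t x hx] at this

theorem Ti_deriv (B : g →ₗ[ℝ] g →ₗ[ℝ] g) (γ : C(II, g)) (t : ℝ) (ht : t ∈ II) :
    HasDerivWithinAt (pathExt (Ti B γ)) (-(pathExt (Ti B γ) t * adCL B (pathExt γ t))) II t := by
  have h := hasDerivWithinAt_ringInverse (Tr_deriv B γ t ht)
    (by rw [pathExt_apply _ t ht]; exact Tr_isUnit_pt B γ _)
  have h1 : ∀ u ∈ II, pathExt (Ti B γ) u = Ring.inverse (pathExt (Tr B γ) u) := by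
    intro u hu
    rw [pathExt_apply _ u hu, pathExt_apply _ u hu, Ti_apply]
  refine (h.congr_of_mem h1 ht).congr_deriv ?_
  rw [← h1 t ht]
  congr 1
  rw [mul_assoc, mul_assoc]
  have : pathExt (Tr B γ) t * pathExt (Ti B γ) t = 1 := by
    rw [pathExt_apply _ t ht, pathExt_apply _ t ht]
    exact DFunLike.congr_fun (Tr_mul_Ti B γ) _
  rw [this, mul_one]

theorem Ti_deriv2 (B : g →ₗ[ℝ] g →ₗ[ℝ] g) (hB : IsLieBracket B) (γ : C(II, g)) (t : ℝ)
    (ht : t ∈ II) :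
    HasDerivWithinAt (pathExt (Ti B γ))
      (-(adCL B (pathExt (actP (Ti B γ) γ) t) * pathExt (Ti B γ) t)) II t := by
  refine (Ti_deriv B γ t ht).congr_deriv ?_
  rw [pathExt_apply _ t ht, pathExt_apply _ t ht, pathExt_apply _ t ht]
  congr 1
  exact DFunLike.congr_fun (Ti_adP B hB γ γ) ⟨t, ht⟩

theorem Ti_zero (B : g →ₗ[ℝ] g →ₗ[ℝ] g) (γ : C(II, g)) : pathExt (Ti B γ) 0 = 1 := by
  have h0 : (0:ℝ) ∈ II := by simp
  rw [pathExt_apply _ 0 h0, Ti_apply, ← pathExt_apply _ 0 h0, Tr_zero, Ring.inverse_one]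

/-- `Tr` is smooth. -/
theorem Tr_hasFDerivAt (B : g →ₗ[ℝ] g →ₗ[ℝ] g) (hB : IsLieBracket B) {Γ : ℝ → C(II, g)}
    {Γ' : C(II, g)} {s : ℝ} {J : Set ℝ} (hΓ : HasDerivWithinAt Γ Γ' J s) :
    HasDerivWithinAt (fun s => Tr B (Γ s))
      (Tr B (Γ s) * adP B (integ (actP (Ti B (Γ s)) Γ'))) J s := by
  have h2 := volSol_deriv (volB B) 1 hΓ
  refine h2.congr_deriv ?_
  set γ := Γ s
  set α := integ (actP (Ti B γ) Γ') with hα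
  refine volSol_unique (volB B) γ _ _ ?_
  change Tr B γ * adP B α = integ (adP B Γ' * Tr B γ) + integ (adP B γ * (Tr B γ * adP B α))
  rw [← map_add]
  · 
    ext1 t
    have := integ_unique (adP B Γ' * Tr B γ + adP B γ * (Tr B γ * adP B α)) (Tr B γ * adP B α)
      (fun t ht => ?_) t
    · rw [this]
      have h0 : α ⟨0, by simp⟩ = 0 := integ_zero _
      have h1 : (Tr B γ * adP B α) ⟨0, by simp⟩ = 0 := by
        rw [ContinuousMap.mul_apply, adP_apply, h0, map_zero, mul_zero]
      rw [h1, zero_add]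
    · have hα' : HasDerivWithinAt (pathExt α) (pathExt (actP (Ti B γ) Γ') t) II t :=
        integ_deriv _ t ht
      refine ((Tr_deriv B γ t ht).mul
        ((adCL B).hasFDerivAt.comp_hasDerivWithinAt t hα')).congr_deriv ?_
      have h5 := Tr_adP B hB γ (actP (Ti B γ) Γ')
      rw [← actP_mul, Tr_mul_Ti, actP_one] at h5
      have h6 : pathExt (Tr B γ) t * adCL B (pathExt (actP (Ti B γ) Γ') t) =
        adCL B (pathExt Γ' t) * pathExt (Tr B γ) t := DFunLike.congr_fun h5 (projIcc 0 1 zero_le_one t)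
      rw [h6, mul_assoc, add_comm]
      rfl
theorem Ti_hasDeriv (B : g →ₗ[ℝ] g →ₗ[ℝ] g) (hB : IsLieBracket B) {Γ : ℝ → C(II, g)}
    {Γ' : C(II, g)} {s : ℝ} {J : Set ℝ} (hΓ : HasDerivWithinAt Γ Γ' J s) :
    HasDerivWithinAt (fun s => Ti B (Γ s))
      (-(adP B (integ (actP (Ti B (Γ s)) Γ')) * Ti B (Γ s))) J s := by
  have := hasDerivWithinAt_ringInverse (R := C(II, g →L[ℝ] g)) (Tr_hasFDerivAt B hB hΓ)
    (Tr_isUnit B (Γ s))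
  have h2 : Ti B (Γ s) * (Tr B (Γ s) * adP B (integ (actP (Ti B (Γ s)) Γ'))) * Ti B (Γ s) =
    adP B (integ (actP (Ti B (Γ s)) Γ')) * Ti B (Γ s) := by
    ext t v
    exact Ti_Tr_apply B _ _ _
  rw [← h2]
  exact this

theorem Tr_contDiff (B : g →ₗ[ℝ] g →ₗ[ℝ] g) : ContDiff ℝ 1 (Tr B) :=
  volSol_contDiff (volB B) 1

theorem Ti_contDiff (B : g →ₗ[ℝ] g →ₗ[ℝ] g) : ContDiff ℝ 1 (Ti B) := by
  rw [contDiff_iff_contDiffAt]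
  intro γ
  obtain ⟨u, hu⟩ := Tr_isUnit B γ
  have h2 := contDiffAt_ringInverse ℝ (n := 1) (R := C(II, g →L[ℝ] g)) u
  rw [hu] at h2
  exact ContDiffAt.comp γ h2 (Tr_contDiff B).contDiffAt

end Transport

section Horizontal

open Set MeasureTheory

set_option synthInstance.maxHeartbeats 200000
set_option linter.unusedSectionVars false

local notation "II" => (Set.Icc (0:ℝ) 1)

variable {g : Type*} [NormedAddCommGroup g] [NormedSpace ℝ g] [FiniteDimensional ℝ g]

theorem eval_hasDeriv {F : Type*} [NormedAddCommGroup F] [NormedSpace ℝ F] {f : ℝ → C(II, F)}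
    {f' : C(II, F)} {J : Set ℝ} {s : ℝ} (h : HasDerivWithinAt f f' J s) (t : II) :
    HasDerivWithinAt (fun s => f s t) (f' t) J s := by
  have h1 := ((ContinuousMap.evalCLM ℝ t : C(II, F) →L[ℝ] F).hasFDerivAt
    (x := f s)).comp_hasDerivWithinAt s h
  exact h1

theorem one_mem_unit : (1:ℝ) ∈ II := by simp

theorem zero_mem_unit : (0:ℝ) ∈ II := by simp

noncomputable def Thet (B : g →ₗ[ℝ] g →ₗ[ℝ] g) (γ δ : C(II, g)) : g :=
  integ (actP (Ti B γ) δ) ⟨1, one_mem_unit⟩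

theorem Thet_eq (B : g →ₗ[ℝ] g →ₗ[ℝ] g) (γ δ : C(II, g)) :
    (∫ t in (0:ℝ)..1, Ring.inverse (transport B (pathExt γ) t) (pathExt δ t)) = Thet B γ δ := by
  rw [Thet, integ_apply]
  refine integral_congr_unit fun t ht => ?_
  rw [transport_eq B γ t ht, pathExt_apply _ t ht, pathExt_apply _ t ht, pathExt_apply _ t ht,
    actP_apply, Ti_apply]

noncomputable def mulP (B : g →ₗ[ℝ] g →ₗ[ℝ] g) (γ δ : C(II, g)) : C(II, g) :=
  γ + actP (Tr B γ) δ

theorem Tr_mulP (B : g →ₗ[ℝ] g →ₗ[ℝ] g) (hB : IsLieBracket B) (γ δ : C(II, g)) :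
    Tr B (mulP B γ δ) = Tr B γ * Tr B δ := by
  symm
  apply Tr_unique
  · change pathExt (Tr B γ) 0 * pathExt (Tr B δ) 0 = 1
    rw [Tr_zero, Tr_zero, one_mul]
  · intro t ht
    refine ((Tr_deriv B γ t ht).mul (Tr_deriv B δ t ht)).congr_deriv ?_
    have h6 : pathExt (Tr B γ) t * adCL B (pathExt δ t) =
        adCL B (pathExt (actP (Tr B γ) δ) t) * pathExt (Tr B γ) t :=
      DFunLike.congr_fun (Tr_adP B hB γ δ) (projIcc 0 1 zero_le_one t)
    have h7 : pathExt (mulP B γ δ) t = pathExt γ t + pathExt (actP (Tr B γ) δ) t := rfl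
    have h8 : pathExt (Tr B γ * Tr B δ) t = pathExt (Tr B γ) t * pathExt (Tr B δ) t := rfl
    rw [h7, h8, map_add, ← mul_assoc, h6, add_mul, mul_assoc, mul_assoc]

theorem Ti_mulP (B : g →ₗ[ℝ] g →ₗ[ℝ] g) (hB : IsLieBracket B) (γ δ : C(II, g)) :
    Ti B (mulP B γ δ) = Ti B δ * Ti B γ := by
  ext t v
  have h2 : Tr B (mulP B γ δ) t (Ti B δ t (Ti B γ t v)) = v := by
    rw [Tr_mulP B hB]
    change Tr B γ t (Tr B δ t (Ti B δ t (Ti B γ t v))) = v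
    rw [Tr_Ti_apply, Tr_Ti_apply]
  have h3 := Ti_Tr_apply B (mulP B γ δ) t (Ti B δ t (Ti B γ t v))
  rw [h2] at h3
  exact h3

theorem mulP_assoc (B : g →ₗ[ℝ] g →ₗ[ℝ] g) (hB : IsLieBracket B) (γ δ ε : C(II, g)) :
    mulP B (mulP B γ δ) ε = mulP B γ (mulP B δ ε) := by
  unfold mulP
  rw [map_add, ← actP_mul, ← Tr_mulP B hB, ← add_assoc]; rfl

/-- the unique `δ` with `p * δ = q` -/
noncomputable def ldivP (B : g →ₗ[ℝ] g →ₗ[ℝ] g) (p q : C(II, g)) : C(II, g) :=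
  actP (Ti B p) (q - p)

theorem mulP_ldivP (B : g →ₗ[ℝ] g →ₗ[ℝ] g) (p q : C(II, g)) :
    mulP B p (ldivP B p q) = q := by
  unfold mulP ldivP
  rw [← actP_mul, Tr_mul_Ti, actP_one]; abel

theorem ldivP_mulP (B : g →ₗ[ℝ] g →ₗ[ℝ] g) (p q : C(II, g)) :
    ldivP B p (mulP B p q) = q := by
  unfold mulP ldivP
  rw [add_sub_cancel_left, ← actP_mul, Ti_mul_Tr, actP_one]

def HorOn (B : g →ₗ[ℝ] g →ₗ[ℝ] g) (Γ Γ' : ℝ → C(II, g)) : Prop :=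
  (∀ s ∈ II, HasDerivWithinAt Γ (Γ' s) II s) ∧ ContinuousOn Γ' II ∧
    ∀ s ∈ II, Thet B (Γ s) (Γ' s) = 0

def Hor (B : g →ₗ[ℝ] g →ₗ[ℝ] g) (γ δ : C(II, g)) : Prop :=
  ∃ Γ Γ' : ℝ → C(II, g), HorOn B Γ Γ' ∧ Γ 0 = γ ∧ Γ 1 = δ

theorem inPathZero_iff (B : g →ₗ[ℝ] g →ₗ[ℝ] g) (γ : C(II, g)) :
    InPathZero B γ ↔ Hor B 0 γ := by
  constructor
  · rintro ⟨Γ, Γ', h1, h2, h3, h4, h5⟩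
    exact ⟨Γ, Γ', ⟨h1, h2, fun s hs => by rw [← Thet_eq]; exact h5 s hs⟩, h3, h4⟩
  · rintro ⟨Γ, Γ', ⟨h1, h2, h5⟩, h3, h4⟩
    exact ⟨Γ, Γ', h1, h2, h3, h4, fun s hs => by rw [Thet_eq]; exact h5 s hs⟩

theorem Thet_smul (B : g →ₗ[ℝ] g →ₗ[ℝ] g) (γ δ : C(II, g)) (r : ℝ) :
    Thet B γ (r • δ) = r • Thet B γ δ := by
  simp [Thet]

theorem HorOn.reparam {B : g →ₗ[ℝ] g →ₗ[ℝ] g} {Γ Γ' : ℝ → C(II, g)} (h : HorOn B Γ Γ')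
    (φ φ' : ℝ → ℝ) (hφ : ∀ s ∈ II, HasDerivAt φ (φ' s) s) (cφ : ContinuousOn φ' II)
    (hm : MapsTo φ II II) : HorOn B (fun s => Γ (φ s)) (fun s => φ' s • Γ' (φ s)) := by
  refine ⟨fun s hs => ?_, ?_, fun s hs => ?_⟩
  · exact (h.1 (φ s) (hm hs)).scomp s (hφ s hs).hasDerivWithinAt hm
  · refine cφ.smul (h.2.1.comp (fun s hs => (hφ s hs).continuousAt.continuousWithinAt) hm)
  · rw [Thet_smul, h.2.2 _ (hm hs), smul_zero]

theorem Hor.symm {B : g →ₗ[ℝ] g →ₗ[ℝ] g} {γ δ : C(II, g)} (h : Hor B γ δ) : Hor B δ γ := by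
  obtain ⟨Γ, Γ', h, h0, h1⟩ := h
  refine ⟨_, _, h.reparam (fun s => 1 - s) (fun _ => -1) (fun s _ => ?_) continuousOn_const ?_,
    by simpa using h1, by simpa using h0⟩
  · simpa using (hasDerivAt_id s).const_sub 1
  · intro s hs
    exact ⟨by linarith [hs.2], by linarith [hs.1]⟩

theorem smoothTr_deriv_low (x : ℝ) (hx : x ≤ 0) : deriv Real.smoothTransition x = 0 := by
  apply IsLocalMin.deriv_eq_zero
  refine Filter.Eventually.of_forall fun y => ?_
  rw [Real.smoothTransition.zero_of_nonpos hx]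
  exact Real.smoothTransition.nonneg y

theorem smoothTr_deriv_high (x : ℝ) (hx : 1 ≤ x) : deriv Real.smoothTransition x = 0 := by
  apply IsLocalMax.deriv_eq_zero
  refine Filter.Eventually.of_forall fun y => ?_
  rw [Real.smoothTransition.one_of_one_le hx]
  exact Real.smoothTransition.le_one y

theorem smoothTr_hasDeriv (x : ℝ) :
    HasDerivAt Real.smoothTransition (deriv Real.smoothTransition x) x :=
  ((Real.smoothTransition.contDiff (n := 1)).differentiable (by norm_num) x).hasDerivAt

theorem smoothTr_cont_deriv : Continuous (deriv Real.smoothTransition) :=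
  (Real.smoothTransition.contDiff (n := 1)).continuous_deriv le_rfl

theorem Hor.trans {B : g →ₗ[ℝ] g →ₗ[ℝ] g} {γ δ ε : C(II, g)} (h : Hor B γ δ) (h' : Hor B δ ε) :
    Hor B γ ε := by
  obtain ⟨Γ, Γ', h, h0, h1⟩ := h
  obtain ⟨Δ, Δ', k, k0, k1⟩ := h'
  have hmem : ∀ x, Real.smoothTransition x ∈ II := fun x =>
    ⟨Real.smoothTransition.nonneg x, Real.smoothTransition.le_one x⟩
  have r1 := h.reparam (fun s => Real.smoothTransition (2 * s))
    (fun s => deriv Real.smoothTransition (2 * s) * 2)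
    (fun s _ => by
      have h2 : HasDerivAt (fun s : ℝ => 2 * s) 2 s := by
        simpa using (hasDerivAt_id s).const_mul (2:ℝ)
      exact (smoothTr_hasDeriv (2 * s)).comp s h2)
    (((smoothTr_cont_deriv.comp (by fun_prop)).mul continuous_const).continuousOn)
    (fun s _ => hmem _)
  have r2 := k.reparam (fun s => Real.smoothTransition (2 * s - 1))
    (fun s => deriv Real.smoothTransition (2 * s - 1) * 2)
    (fun s _ => by
      have h2 : HasDerivAt (fun s : ℝ => 2 * s - 1) 2 s := by
        simpa using ((hasDerivAt_id s).const_mul (2:ℝ)).sub_const 1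
      exact (smoothTr_hasDeriv (2 * s - 1)).comp s h2)
    (((smoothTr_cont_deriv.comp (by fun_prop)).mul continuous_const).continuousOn)
    (fun s _ => hmem _)
  refine ⟨fun s => Γ (Real.smoothTransition (2 * s)) + Δ (Real.smoothTransition (2 * s - 1)) - δ,
    _, ⟨fun s hs => ((r1.1 s hs).add (r2.1 s hs)).sub_const δ, r1.2.1.add r2.2.1, ?_⟩, ?_, ?_⟩
  · intro s hs
    rcases le_total s (1/2) with hs2 | hs2
    · have e1 : Real.smoothTransition (2 * s - 1) = 0 :=
        Real.smoothTransition.zero_of_nonpos (by linarith)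
      have e2 := smoothTr_deriv_low (2 * s - 1) (by linarith)
      have := r1.2.2 s hs
      simp only [e1, e2, k0, zero_mul, zero_smul, add_zero, add_sub_cancel_right]
      exact this
    · have e1 : Real.smoothTransition (2 * s) = 1 :=
        Real.smoothTransition.one_of_one_le (by linarith)
      have e2 := smoothTr_deriv_high (2 * s) (by linarith)
      have := r2.2.2 s hs
      simp only [e1, e2, h1, zero_mul, zero_smul, zero_add, add_sub_cancel_left]
      exact this
  · have : Real.smoothTransition (2 * 0 - 1) = 0 :=
      Real.smoothTransition.zero_of_nonpos (by norm_num)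
    have h2 : Real.smoothTransition (2 * 0) = 0 :=
      Real.smoothTransition.zero_of_nonpos (by norm_num)
    simp only [this, h2, h0, k0]; abel
  · have : Real.smoothTransition (2 * 1 - 1) = 1 :=
      Real.smoothTransition.one_of_one_le (by norm_num)
    have h2 : Real.smoothTransition (2 * 1) = 1 :=
      Real.smoothTransition.one_of_one_le (by norm_num)
    simp only [this, h2, h1, k1]; abel

theorem Hor.left {B : g →ₗ[ℝ] g →ₗ[ℝ] g} (hB : IsLieBracket B) {γ δ : C(II, g)} (h : Hor B γ δ)
    (p : C(II, g)) : Hor B (mulP B p γ) (mulP B p δ) := by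
  obtain ⟨Γ, Γ', h, h0, h1⟩ := h
  refine ⟨fun s => mulP B p (Γ s), fun s => actP (Tr B p) (Γ' s), ⟨fun s hs => ?_, ?_, ?_⟩,
    by simp only [h0], by simp only [h1]⟩
  · exact (((actP (Tr B p)).hasFDerivAt.comp_hasDerivWithinAt s (h.1 s hs))).const_add p
  · exact (actP (Tr B p)).continuous.comp_continuousOn h.2.1
  · intro s hs
    rw [← h.2.2 s hs, Thet, Ti_mulP B hB, actP_mul, ← actP_mul (Ti B p), Ti_mul_Tr, actP_one]
    rfl

theorem Hor.refl (B : g →ₗ[ℝ] g →ₗ[ℝ] g) (γ : C(II, g)) : Hor B γ γ :=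
  ⟨fun _ => γ, fun _ => 0, ⟨fun s _ => hasDerivWithinAt_const _ _ _, continuousOn_const,
    fun s _ => by simp [Thet]⟩, rfl, rfl⟩

theorem Hor.Tr_one {B : g →ₗ[ℝ] g →ₗ[ℝ] g} (hB : IsLieBracket B) {γ δ : C(II, g)}
    (h : Hor B γ δ) : Tr B γ ⟨1, one_mem_unit⟩ = Tr B δ ⟨1, one_mem_unit⟩ := by
  obtain ⟨Γ, Γ', h, h0, h1⟩ := h
  have key := lin_ode_unique (fun _ => (0 : (g →L[ℝ] g) →L[ℝ] (g →L[ℝ] g))) continuous_const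
    (fun s => Tr B (Γ s) ⟨1, one_mem_unit⟩ - Tr B (Γ 0) ⟨1, one_mem_unit⟩) (fun s hs => ?_)
    (by simp) 1 one_mem_unit
  · rw [h0, h1, sub_eq_zero] at key
    exact key.symm
  · have h2 := Tr_hasFDerivAt B hB (h.1 s hs)
    have h3 := eval_hasDeriv h2 ⟨1, one_mem_unit⟩
    refine (h3.sub_const _).congr_deriv ?_
    have h4 : integ (actP (Ti B (Γ s)) (Γ' s)) ⟨1, one_mem_unit⟩ = 0 := h.2.2 s hs
    change Tr B (Γ s) ⟨1, one_mem_unit⟩ *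
      adCL B (integ (actP (Ti B (Γ s)) (Γ' s)) ⟨1, one_mem_unit⟩) = _
    rw [h4]; simp

end Horizontal

section KeyApply

open Set MeasureTheory

set_option synthInstance.maxHeartbeats 200000
set_option linter.unusedSectionVars false

local notation "II" => (Set.Icc (0:ℝ) 1)

theorem joint_cont {F : Type*} [NormedAddCommGroup F] [NormedSpace ℝ F] (A : ℝ → C(II, F))
    (hA : ContinuousOn A II) :
    Continuous (Function.uncurry fun s t : ℝ =>
      pathExt (A (projIcc (0:ℝ) 1 zero_le_one s)) t) := by
  have h1 : Continuous fun s : ℝ => A (projIcc (0:ℝ) 1 zero_le_one s) :=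
    hA.comp_continuous (continuous_subtype_val.comp continuous_projIcc) (fun s => Subtype.coe_prop _)
  have h2 : Continuous fun p : ℝ × ℝ => (A (projIcc (0:ℝ) 1 zero_le_one p.1))
      (projIcc (0:ℝ) 1 zero_le_one p.2) :=
    (h1.comp continuous_fst).eval (continuous_projIcc.comp continuous_snd)
  exact h2

theorem joint_deriv {F : Type*} [NormedAddCommGroup F] [NormedSpace ℝ F] {A : ℝ → C(II, F)}
    {A' : C(II, F)} {s : ℝ} (hs : s ∈ II) (hA : HasDerivWithinAt A A' II s) (t : ℝ) :
    HasDerivWithinAt (fun s : ℝ => pathExt (A (projIcc (0:ℝ) 1 zero_le_one s)) t)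
      (pathExt A' t) II s := by
  have h := eval_hasDeriv hA (projIcc (0:ℝ) 1 zero_le_one t)
  refine h.congr_of_mem (fun u hu => ?_) hs
  rw [projIcc_of_mem _ hu]; rfl

theorem bil_hasDeriv {X Y Z : Type*} [NormedAddCommGroup X] [NormedSpace ℝ X]
    [NormedAddCommGroup Y] [NormedSpace ℝ Y] [NormedAddCommGroup Z] [NormedSpace ℝ Z]
    (b : X →L[ℝ] Y →L[ℝ] Z) {f : ℝ → X} {f' : X} {h : ℝ → Y}
    {h' : Y} {J : Set ℝ} {s : ℝ} (hf : HasDerivWithinAt f f' J s)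
    (hh : HasDerivWithinAt h h' J s) :
    HasDerivWithinAt (fun s => b (f s) (h s)) (b f' (h s) + b (f s) h') J s :=
  (b.hasFDerivAt.comp_hasDerivWithinAt s hf).clm_apply hh

theorem bilC_hasDeriv {E F G : Type*} [NormedAddCommGroup E] [NormedSpace ℝ E]
    [NormedAddCommGroup F] [NormedSpace ℝ F] [NormedAddCommGroup G] [NormedSpace ℝ G]
    (b : E →L[ℝ] F →L[ℝ] G) {f : ℝ → C(II, E)} {f' : C(II, E)} {h : ℝ → C(II, F)}
    {h' : C(II, F)} {J : Set ℝ} {s : ℝ} (hf : HasDerivWithinAt f f' J s)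
    (hh : HasDerivWithinAt h h' J s) :
    HasDerivWithinAt (fun s => bilC b (f s) (h s)) (bilC b f' (h s) + bilC b (f s) h') J s :=
  bil_hasDeriv (X := C(II, E)) (Y := C(II, F)) (Z := C(II, G)) (bilC b) hf hh

theorem bilC_continuousOn {E F G : Type*} [NormedAddCommGroup E] [NormedSpace ℝ E]
    [NormedAddCommGroup F] [NormedSpace ℝ F] [NormedAddCommGroup G] [NormedSpace ℝ G]
    (b : E →L[ℝ] F →L[ℝ] G) {f : ℝ → C(II, E)} {h : ℝ → C(II, F)}
    {J : Set ℝ} (hf : ContinuousOn f J) (hh : ContinuousOn h J) :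
    ContinuousOn (fun s => bilC b (f s) (h s)) J :=
  ((bilC b).continuous.comp_continuousOn hf).clm_apply hh

variable {g : Type*} [NormedAddCommGroup g] [NormedSpace ℝ g] [FiniteDimensional ℝ g]

theorem Tr_const_center (B : g →ₗ[ℝ] g →ₗ[ℝ] g) (x : g) (hx : ∀ y, B x y = 0) :
    Tr B (ContinuousMap.const II x) = 1 := by
  symm
  apply Tr_unique
  · rfl
  · intro t ht
    refine (hasDerivWithinAt_const t II (1 : g →L[ℝ] g)).congr_deriv ?_
    ext v
    exact (hx v).symm

theorem Ti_const_center (B : g →ₗ[ℝ] g →ₗ[ℝ] g) (x : g) (hx : ∀ y, B x y = 0) (t : II) :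
    Ti B (ContinuousMap.const II x) t = 1 := by
  rw [Ti_apply, Tr_const_center B x hx]
  exact Ring.inverse_one _

theorem hor_central (B : g →ₗ[ℝ] g →ₗ[ℝ] g) (hB : IsLieBracket B) (x : g) (hx : ∀ y, B x y = 0)
    (h : Hor B 0 (ContinuousMap.const II x)) : x = 0 := by
  obtain ⟨Γ, Γ', ⟨h1, h2, h3⟩, h4, h5⟩ := h
  have cΓ : ContinuousOn Γ II := fun s hs => (h1 s hs).continuousWithinAt
  have cT : ContinuousOn (fun s => Ti B (Γ s)) II :=
    (Ti_contDiff B).continuous.comp_continuousOn cΓ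
  have cc : ContinuousOn (fun s => actP (Ti B (Γ s)) (Γ' s)) II := bilC_continuousOn _ cT h2
  have cb : ContinuousOn (fun s => actP (Ti B (Γ s)) (Γ s)) II := bilC_continuousOn _ cT cΓ
  have ca : ContinuousOn (fun s => integ (actP (Ti B (Γ s)) (Γ' s))) II :=
    integ.continuous.comp_continuousOn cc
  have cab : ContinuousOn (fun s => brP B (integ (actP (Ti B (Γ s)) (Γ' s)))
    (actP (Ti B (Γ s)) (Γ s))) II := bilC_continuousOn _ ca cb
  have cd := cc.sub cab
  have hp : ∀ s (hs : s ∈ II), projIcc (0:ℝ) 1 zero_le_one s = ⟨s, hs⟩ :=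
    fun s hs => projIcc_of_mem _ hs
  refine key_period B hB x hx _ _ _ _ _ (joint_cont _ ca) (joint_cont _ cb) (joint_cont _ cc)
    (joint_cont _ cd) (joint_cont _ cT) ?_ ?_ ?_ ?_ ?_ ?_ ?_ ?_ ?_ ?_ ?_ ?_
  · intro s hs t ht
    exact Ti_deriv2 B hB _ t ht
  · intro s hs t ht
    have := joint_deriv hs (Ti_hasDeriv B hB (h1 s hs)) t
    refine this.congr_deriv ?_
    rw [hp s hs]; rfl
  · intro s hs t ht
    exact integ_deriv _ t ht
  · intro s hs t ht
    have h6 := bilC_hasDeriv (ContinuousLinearMap.id ℝ (g →L[ℝ] g))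
      (Ti_hasDeriv B hB (h1 s hs)) (h1 s hs)
    have := joint_deriv hs h6 t
    refine this.congr_deriv ?_
    rw [hp s hs]
    rw [pathExt_apply _ t ht, pathExt_apply _ t ht]
    change -(adCL B (integ (actP (Ti B (Γ s)) (Γ' s)) ⟨t, ht⟩) (Ti B (Γ s) ⟨t, ht⟩ (Γ s ⟨t, ht⟩)))
      + Ti B (Γ s) ⟨t, ht⟩ (Γ' s ⟨t, ht⟩) = Ti B (Γ s) ⟨t, ht⟩ (Γ' s ⟨t, ht⟩) -
      (adCL B (integ (actP (Ti B (Γ s)) (Γ' s)) ⟨t, ht⟩) (Ti B (Γ s) ⟨t, ht⟩ (Γ s ⟨t, ht⟩)))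
    abel
  · intro s hs t ht
    rw [hp s hs]
    simp only [pathExt_apply _ t ht]
    exact sub_sub_cancel _ _
  · intro s hs
    rw [pathExt_apply _ 0 zero_mem_unit]
    exact integ_zero _
  · intro s hs
    rw [pathExt_apply _ 1 one_mem_unit, hp s hs]
    exact h3 s hs
  · intro t ht
    simp only [hp 0 zero_mem_unit, h4, map_zero]
    rw [pathExt_apply _ t ht]; rfl
  · intro t ht
    simp only [hp 1 one_mem_unit, h5]
    rw [pathExt_apply _ t ht, actP_apply, Ti_const_center B x hx]
    rfl
  · intro s hs t ht y z
    rw [pathExt_apply _ t ht]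
    exact Ti_auto B hB _ _ _ _
  · intro s hs t ht
    rw [pathExt_apply _ t ht]
    exact Ti_center B hB _ _ _ hx
  · intro t ht
    simp only [hp 1 one_mem_unit, h5]
    rw [pathExt_apply _ t ht, Ti_const_center B x hx]

end KeyApply

section LocalLemma

open Set MeasureTheory

set_option synthInstance.maxHeartbeats 200000
set_option linter.unusedSectionVars false

local notation "II" => (Set.Icc (0:ℝ) 1)

theorem picard_mem {E : Type*} [NormedAddCommGroup E] [NormedSpace ℝ E] [CompleteSpace E]
    {f : ℝ → E → E} {x₀ : E} {a L K : NNReal}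
    (hf : IsPicardLindelof f (⟨0, zero_mem_unit⟩ : II) x₀ a 0 L K) :
    ∃ α : ℝ → E, α 0 = x₀ ∧ (∀ t ∈ II, α t ∈ Metric.closedBall x₀ a) ∧
      (∀ t ∈ II, HasDerivWithinAt α (f t (α t)) II t) ∧
      ContinuousOn (fun t => f t (α t)) II := by
  have hx : x₀ ∈ Metric.closedBall x₀ ((0 : NNReal) : ℝ) := by simp
  obtain ⟨α, hα⟩ := ODE.FunSpace.exists_isFixedPt_next hf hx
  have hc : Continuous α.compProj := α.continuous_compProj
  have hm : ∀ t ∈ II, α.compProj t ∈ Metric.closedBall x₀ a :=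
    fun t _ => α.compProj_mem_closedBall hf.mul_max_le
  have he : ∀ t ∈ II, α.compProj t = ODE.picard f 0 x₀ α.compProj t := by
    intro t ht
    have := (ODE.FunSpace.isFixedPt_next_iff hf hx).1 hα ⟨t, ht⟩
    rw [ODE.FunSpace.compProj_of_mem ht]
    exact this
  refine ⟨α.compProj, ?_, hm, ?_, ?_⟩
  · rw [he 0 zero_mem_unit]; simp [ODE.picard]
  · intro t ht
    have := ODE.hasDerivWithinAt_picard_Icc zero_mem_unit hf.continuousOn_uncurry
      hc.continuousOn hm x₀ ht
    exact this.congr_of_mem he ht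
  · exact hf.continuousOn_uncurry.comp (continuousOn_id.prodMk hc.continuousOn)
      (fun t ht => ⟨ht, hm t ht⟩)

variable {g : Type*} [NormedAddCommGroup g] [NormedSpace ℝ g] [FiniteDimensional ℝ g]

/-- constant paths -/
noncomputable def cst : g →L[ℝ] C(II, g) :=
  LinearMap.toContinuousLinearMap
    ({ toFun := fun x => ContinuousMap.const II x
       map_add' := by intro x y; ext v; simp
       map_smul' := by intro r y; ext v; simp } : g →ₗ[ℝ] C(II, g))

theorem cst_eq (x : g) : cst x = ContinuousMap.const II x := rfl

theorem cst_apply (x : g) (t : II) : cst x t = x := rfl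

noncomputable def Dx (B : g →ₗ[ℝ] g →ₗ[ℝ] g) (x : g) : g →L[ℝ] g :=
  integ (Ti B (cst x)) ⟨1, one_mem_unit⟩

noncomputable def Hx (B : g →ₗ[ℝ] g →ₗ[ℝ] g) (x : g) : g →L[ℝ] g :=
  Ti B (cst x) ⟨1, one_mem_unit⟩

theorem const_of_deriv {F : Type*} [NormedAddCommGroup F] [NormedSpace ℝ F] (f : ℝ → F)
    (hf : ∀ t ∈ II, HasDerivWithinAt f 0 II t) (h0 : f 0 = 0) : f 1 = 0 :=
  lin_ode_unique (fun _ => (0 : F →L[ℝ] F)) continuous_const f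
    (fun t ht => (hf t ht).congr_deriv (by simp)) h0 1 one_mem_unit

theorem Thet_cst (B : g →ₗ[ℝ] g →ₗ[ℝ] g) (x y : g) : Thet B (cst x) (cst y) = Dx B x y := by
  have := const_of_deriv (fun t => pathExt (integ (actP (Ti B (cst x)) (cst y))) t -
    pathExt (integ (Ti B (cst x))) t y) (fun t ht => ?_) ?_
  · rw [pathExt_apply _ 1 one_mem_unit, pathExt_apply _ 1 one_mem_unit] at this
    exact sub_eq_zero.1 this
  · refine ((integ_deriv (actP (Ti B (cst x)) (cst y)) t ht).sub
      ((integ_deriv (Ti B (cst x)) t ht).clm_apply (hasDerivWithinAt_const t II y))).congr_deriv ?_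
    rw [pathExt_apply _ t ht, pathExt_apply _ t ht, actP_apply, cst_apply]; simp
  · rw [pathExt_apply _ 0 zero_mem_unit, pathExt_apply _ 0 zero_mem_unit, integ_zero, integ_zero]
    simp

theorem Hx_eq (B : g →ₗ[ℝ] g →ₗ[ℝ] g) (x : g) : Hx B x - 1 + Dx B x * adCL B x = 0 := by
  have := const_of_deriv (fun t => pathExt (Ti B (cst x)) t - 1 +
    pathExt (integ (Ti B (cst x))) t * adCL B x) (fun t ht => ?_) ?_
  · rw [pathExt_apply _ 1 one_mem_unit, pathExt_apply _ 1 one_mem_unit] at this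
    exact this
  · refine (((Ti_deriv B (cst x) t ht).sub_const 1).add
      ((integ_deriv (Ti B (cst x)) t ht).mul_const (adCL B x))).congr_deriv ?_
    rw [pathExt_apply (cst x) t ht, cst_apply]; simp
  · simp only [Ti_zero]
    rw [pathExt_apply _ 0 zero_mem_unit, integ_zero]
    simp

theorem Ti_zero_path (B : g →ₗ[ℝ] g →ₗ[ℝ] g) (t : II) : Ti B 0 t = 1 := by
  have := Ti_const_center B 0 (by simp) t
  exact this

theorem Tr_zero_path (B : g →ₗ[ℝ] g →ₗ[ℝ] g) : Tr B 0 = 1 := by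
  have := Tr_const_center B 0 (by simp)
  exact this

theorem Dx_zero (B : g →ₗ[ℝ] g →ₗ[ℝ] g) : Dx B 0 = 1 := by
  rw [Dx, integ_apply, map_zero]
  have : ∀ t, pathExt (Ti B 0) t = 1 := fun t => Ti_zero_path B _
  simp [this]

theorem eval_contDiff {X F : Type*} [NormedAddCommGroup X] [NormedSpace ℝ X]
    [NormedAddCommGroup F] [NormedSpace ℝ F] {f : X → C(II, F)} (h : ContDiff ℝ 1 f) (t : II) :
    ContDiff ℝ 1 (fun s => f s t) := by
  have h1 := (ContinuousMap.evalCLM ℝ t : C(II, F) →L[ℝ] F).contDiff (n := 1)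
  exact h1.comp h

theorem integ_contDiff {X F : Type*} [NormedAddCommGroup X] [NormedSpace ℝ X]
    [NormedAddCommGroup F] [NormedSpace ℝ F] [CompleteSpace F] {f : X → C(II, F)}
    (h : ContDiff ℝ 1 f) : ContDiff ℝ 1 (fun s => integ (f s)) := by
  have h1 := (integ : C(II, F) →L[ℝ] C(II, F)).contDiff (n := 1)
  exact h1.comp h

theorem Ti_cst_contDiff (B : g →ₗ[ℝ] g →ₗ[ℝ] g) : ContDiff ℝ 1 (fun x => Ti B (cst x)) :=
  (Ti_contDiff B).comp ((cst : g →L[ℝ] C(II, g)).contDiff)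

theorem Dx_contDiff (B : g →ₗ[ℝ] g →ₗ[ℝ] g) : ContDiff ℝ 1 (Dx B) :=
  eval_contDiff (integ_contDiff (Ti_cst_contDiff B)) _

theorem Hx_contDiff (B : g →ₗ[ℝ] g →ₗ[ℝ] g) : ContDiff ℝ 1 (Hx B) :=
  eval_contDiff (Ti_cst_contDiff B) _

noncomputable def Gx (B : g →ₗ[ℝ] g →ₗ[ℝ] g) (x : g) : g →L[ℝ] g :=
  -(Ring.inverse (Dx B x) * Hx B x)

theorem Gx_contDiff (B : g →ₗ[ℝ] g →ₗ[ℝ] g) : ContDiffAt ℝ 1 (Gx B) 0 := by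
  have h2 := contDiffAt_ringInverse ℝ (n := 1) (R := g →L[ℝ] g) 1
  rw [Units.val_one, ← Dx_zero B] at h2
  have h3 : ContDiffAt ℝ 1 (fun x => Ring.inverse (Dx B x)) 0 :=
    ContDiffAt.comp 0 h2 (Dx_contDiff B).contDiffAt
  exact (h3.mul (Hx_contDiff B).contDiffAt).neg

theorem Gx_local (B : g →ₗ[ℝ] g →ₗ[ℝ] g) : ∃ r > 0, ∃ K : NNReal, ∃ M > 0,
    LipschitzOnWith K (Gx B) (Metric.closedBall 0 r) ∧
    ∀ x ∈ Metric.closedBall (0:g) r, IsUnit (Dx B x) ∧ ‖Gx B x‖ ≤ M := by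
  obtain ⟨K, t, ht, hK⟩ := (Gx_contDiff B).exists_lipschitzOnWith
  have h1 : ∀ᶠ x in nhds (0:g), IsUnit (Dx B x) := by
    have hc : Filter.Tendsto (Dx B) (nhds 0) (nhds (Dx B 0)) :=
      (Dx_contDiff B).continuous.tendsto 0
    refine hc.eventually ?_
    rw [Dx_zero]
    exact Units.isOpen.mem_nhds isUnit_one
  have h2 : ∀ᶠ x in nhds (0:g), ‖Gx B x‖ < ‖Gx B 0‖ + 1 :=
    (Gx_contDiff B).continuousAt.norm.eventually (gt_mem_nhds (by simp))
  obtain ⟨r, hr, hb⟩ := Metric.nhds_basis_closedBall.mem_iff.1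
    (Filter.inter_mem ht (Filter.inter_mem h1 h2))
  refine ⟨r, hr, K, ‖Gx B 0‖ + 1, by positivity, hK.mono fun x hx => (hb hx).1, fun x hx =>
    ⟨(hb hx).2.1, (hb hx).2.2.le⟩⟩

theorem Thet_continuous (B : g →ₗ[ℝ] g →ₗ[ℝ] g) :
    Continuous fun p : C(II, g) × C(II, g) => Thet B p.1 p.2 := by
  have h1 : Continuous fun p : C(II, g) × C(II, g) => Ti B p.1 :=
    (Ti_contDiff B).continuous.comp continuous_fst
  have h2 : Continuous fun p : C(II, g) × C(II, g) => actP (Ti B p.1) p.2 :=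
    (actP.continuous.comp h1).clm_apply continuous_snd
  have h3 := integ.continuous.comp h2
  exact (continuous_eval_const (⟨1, one_mem_unit⟩ : II)).comp h3

theorem Thet_cocycle (B : g →ₗ[ℝ] g →ₗ[ℝ] g) (hB : IsLieBracket B) (γ γ' δ δ' : C(II, g)) :
    Thet B (mulP B γ δ) (γ' + (actP (Tr B γ * adP B (integ (actP (Ti B γ) γ'))) δ +
      actP (Tr B γ) δ')) =
    Ti B δ ⟨1, one_mem_unit⟩ (Thet B γ γ') + Thet B δ δ' := by
  set a := integ (actP (Ti B γ) γ') with ha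
  set w := γ' + (actP (Tr B γ * adP B a) δ + actP (Tr B γ) δ') with hw
  have hanti : ∀ u v, B u v + B v u = 0 := by
    intro u v
    have := hB.1 (u + v)
    simpa [hB.1] using this
  have := const_of_deriv (fun t => pathExt (integ (actP (Ti B (mulP B γ δ)) w)) t -
    (pathExt (Ti B δ) t (pathExt a t) + pathExt (integ (actP (Ti B δ) δ')) t)) (fun t ht => ?_) ?_
  · simp only [pathExt_apply _ 1 one_mem_unit] at this
    exact sub_eq_zero.1 this
  · have ha' : HasDerivWithinAt (pathExt a) (pathExt (actP (Ti B γ) γ') t) II t :=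
      integ_deriv _ t ht
    refine ((integ_deriv (actP (Ti B (mulP B γ δ)) w) t ht).sub
      (((Ti_deriv B δ t ht).clm_apply ha').add (integ_deriv (actP (Ti B δ) δ') t ht))).congr_deriv ?_
    rw [Ti_mulP B hB]
    simp only [pathExt_apply _ t ht]
    set τ : II := ⟨t, ht⟩
    change Ti B δ τ (Ti B γ τ (γ' τ + (Tr B γ τ (B (a τ) (δ τ)) + Tr B γ τ (δ' τ)))) -
      (-(Ti B δ τ (B (δ τ) (a τ))) + Ti B δ τ (Ti B γ τ (γ' τ)) + Ti B δ τ (δ' τ)) = 0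
    simp only [map_add, Ti_Tr_apply]
    rw [eq_neg_of_add_eq_zero_left (hanti (a τ) (δ τ))]
    simp only [map_neg]
    abel
  · simp only [pathExt_apply _ 0 zero_mem_unit]
    rw [ha, integ_zero, integ_zero, integ_zero]
    simp

theorem small_gen {X Y : Type*} [NormedAddCommGroup X] [NormedSpace ℝ X] [NormedAddCommGroup Y]
    (F : X → X → Y) (hF : Continuous fun p : X × X => F p.1 p.2) (h0 : F 0 0 = 0) (η : ℝ)
    (hη : 0 < η) : ∃ ε > 0, ∀ δ : X, ‖δ‖ < ε → ∀ s ∈ II, ‖F (s • δ) δ‖ ≤ η := by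
  obtain ⟨ε, hε, h1⟩ := Metric.continuousAt_iff.1
    (hF.continuousAt (x := ((0 : X), (0 : X)))) η hη
  refine ⟨ε, hε, fun δ hδ s hs => ?_⟩
  have h2 : dist ((s • δ), δ) ((0 : X), (0 : X)) < ε := by
    rw [Prod.dist_eq, dist_zero_right, dist_zero_right, norm_smul]
    refine max_lt ?_ hδ
    refine lt_of_le_of_lt ?_ hδ
    rw [Real.norm_of_nonneg hs.1]
    exact mul_le_of_le_one_left (norm_nonneg _) hs.2
  have h3 := h1 h2
  simp only [h0, dist_zero_right] at h3
  exact h3.le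

theorem line_cont_gen {X Y : Type*} [NormedAddCommGroup X] [NormedSpace ℝ X]
    [NormedAddCommGroup Y]
    (F : X → X → Y) (hF : Continuous fun p : X × X => F p.1 p.2) (δ : X) :
    Continuous fun s : ℝ => F (s • δ) δ :=
  hF.comp ((continuous_id.smul continuous_const).prodMk continuous_const)

theorem Thet_zero (B : g →ₗ[ℝ] g →ₗ[ℝ] g) : Thet B (0 : C(II, g)) 0 = 0 := by simp [Thet]

theorem ode_gen {E : Type*} [NormedAddCommGroup E] [NormedSpace ℝ E] [CompleteSpace E]
    (G : E → E →L[ℝ] E) (θ : ℝ → E) (a η K : NNReal) (M : ℝ) (hM : 0 < M)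
    (hK : LipschitzOnWith K G (Metric.closedBall 0 a))
    (hG : ∀ x ∈ Metric.closedBall (0:E) a, ‖G x‖ ≤ M) (cθ : Continuous θ)
    (bθ : ∀ s ∈ II, ‖θ s‖ ≤ η) (hMη : M * (η : ℝ) ≤ a) :
    ∃ α : ℝ → E, α 0 = 0 ∧ (∀ s ∈ II, α s ∈ Metric.closedBall (0:E) a) ∧
      (∀ s ∈ II, HasDerivWithinAt α (G (α s) (θ s)) II s) ∧
      ContinuousOn (fun s => G (α s) (θ s)) II := by
  have pl : IsPicardLindelof (fun s x => G x (θ s)) (⟨0, zero_mem_unit⟩ : II) (0:E) a 0 a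
      (K * η) := by
    refine ⟨fun s hs => ?_, fun x hx => ?_, fun s hs x hx => ?_, ?_⟩
    · refine LipschitzOnWith.of_dist_le_mul fun x hx y hy => ?_
      rw [dist_eq_norm, ← ContinuousLinearMap.sub_apply]
      refine (ContinuousLinearMap.le_opNorm _ _).trans ?_
      have h5 := hK.dist_le_mul x hx y hy
      rw [dist_eq_norm] at h5
      calc _ ≤ (K * dist x y) * η := by
            apply mul_le_mul h5 (bθ s hs) (norm_nonneg _) (by positivity)
        _ = _ := by push_cast; ring
    · exact ((G x).continuous.comp cθ).continuousOn
    · refine (ContinuousLinearMap.le_opNorm _ _).trans ?_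
      calc _ ≤ M * (η : ℝ) := mul_le_mul (hG x hx) (bθ s hs) (norm_nonneg _) hM.le
        _ ≤ a := hMη
    · simp
  exact picard_mem pl

theorem local_ode (B : g →ₗ[ℝ] g →ₗ[ℝ] g) (a : ℝ) (ha : 0 < a) :
    ∃ ε > 0, ∀ δ : C(II, g), ‖δ‖ < ε → ∃ α : ℝ → g, α 0 = 0 ∧
      (∀ s ∈ II, ‖α s‖ ≤ a ∧ IsUnit (Dx B (α s))) ∧
      (∀ s ∈ II, HasDerivWithinAt α (Gx B (α s) (Thet B (s • δ) δ)) II s) ∧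
      ContinuousOn (fun s => Gx B (α s) (Thet B (s • δ) δ)) II := by
  obtain ⟨r, hr, K, M, hM, hK, hG⟩ := Gx_local B
  obtain ⟨b, hb0, hba, hbr⟩ : ∃ b : NNReal, (0:ℝ) < b ∧ (b:ℝ) ≤ a ∧ (b:ℝ) ≤ r :=
    ⟨⟨min a r, (lt_min ha hr).le⟩, lt_min ha hr, min_le_left _ _, min_le_right _ _⟩
  obtain ⟨η, hη0, hη⟩ : ∃ η : NNReal, (0:ℝ) < η ∧ M * (η:ℝ) ≤ b :=
    ⟨⟨b / M, (div_pos hb0 hM).le⟩, div_pos hb0 hM, (mul_div_cancel₀ _ hM.ne').le⟩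
  obtain ⟨ε, hε, h1⟩ := small_gen (Thet B) (Thet_continuous B) (Thet_zero B) η hη0
  refine ⟨ε, hε, fun δ hδ => ?_⟩
  have hsub : Metric.closedBall (0:g) b ⊆ Metric.closedBall 0 r :=
    Metric.closedBall_subset_closedBall hbr
  haveI : CompleteSpace g := FiniteDimensional.complete ℝ g
  obtain ⟨α, α0, αm, αd, αc⟩ := ode_gen (Gx B) (fun s => Thet B (s • δ) δ) b η K M hM
    (hK.mono hsub) (fun x hx => (hG x (hsub hx)).2) (line_cont_gen (Thet B) (Thet_continuous B) δ)
    (h1 δ hδ) hη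
  refine ⟨α, α0, fun s hs => ⟨?_, (hG _ (hsub (αm s hs))).1⟩, αd, αc⟩
  exact (mem_closedBall_zero_iff.1 (αm s hs)).trans hba

theorem clm_hasDeriv {X Y : Type*} [NormedAddCommGroup X] [NormedSpace ℝ X]
    [NormedAddCommGroup Y] [NormedSpace ℝ Y] (L : X →L[ℝ] Y) {f : ℝ → X} {f' : X}
    {J : Set ℝ} {s : ℝ} (hf : HasDerivWithinAt f f' J s) :
    HasDerivWithinAt (fun s => L (f s)) (L f') J s :=
  L.hasFDerivAt.comp_hasDerivWithinAt s hf

theorem line_hasDeriv {X : Type*} [NormedAddCommGroup X] [NormedSpace ℝ X] (δ : X) (J : Set ℝ)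
    (s : ℝ) : HasDerivWithinAt (fun s : ℝ => s • δ) δ J s := by
  simpa using ((hasDerivAt_id s).smul_const δ).hasDerivWithinAt

theorem line_continuous {X : Type*} [NormedAddCommGroup X] [NormedSpace ℝ X] (δ : X) :
    Continuous (fun s : ℝ => s • δ) := continuous_id.smul continuous_const

theorem cst_hasDeriv {f : ℝ → g} {f' : g} {J : Set ℝ} {s : ℝ} (hf : HasDerivWithinAt f f' J s) :
    HasDerivWithinAt (fun s => cst (f s)) (cst f') J s :=
  clm_hasDeriv (cst (g := g)) hf

theorem mulP_hasDeriv (B : g →ₗ[ℝ] g →ₗ[ℝ] g) (hB : IsLieBracket B) {γ δ : ℝ → C(II, g)}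
    {γ' δ' : C(II, g)} {J : Set ℝ} {s : ℝ} (hγ : HasDerivWithinAt γ γ' J s)
    (hδ : HasDerivWithinAt δ δ' J s) :
    HasDerivWithinAt (fun s => mulP B (γ s) (δ s))
      (γ' + (actP (Tr B (γ s) * adP B (integ (actP (Ti B (γ s)) γ'))) (δ s) +
      actP (Tr B (γ s)) δ')) J s := by
  have h := bilC_hasDeriv (ContinuousLinearMap.id ℝ (g →L[ℝ] g)) (Tr_hasFDerivAt B hB hγ) hδ
  exact hγ.add h

theorem mul_continuousOn_path {f h : ℝ → C(II, g →L[ℝ] g)} {J : Set ℝ}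
    (hf : ContinuousOn f J) (hh : ContinuousOn h J) : ContinuousOn (fun s => f s * h s) J :=
  bilC_continuousOn (ContinuousLinearMap.mul ℝ (g →L[ℝ] g)) hf hh

theorem mulP_deriv_cont (B : g →ₗ[ℝ] g →ₗ[ℝ] g) {γ δ γ' δ' : ℝ → C(II, g)}
    {J : Set ℝ} (hγ : ContinuousOn γ J) (hδ : ContinuousOn δ J)
    (hγ' : ContinuousOn γ' J) (hδ' : ContinuousOn δ' J) :
    ContinuousOn (fun s => γ' s + (actP (Tr B (γ s) * adP B (integ (actP (Ti B (γ s)) (γ' s))))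
      (δ s) + actP (Tr B (γ s)) (δ' s))) J := by
  have cTr : ContinuousOn (fun s : ℝ => Tr B (γ s)) J :=
    (Tr_contDiff B).continuous.comp_continuousOn hγ
  have cTi : ContinuousOn (fun s : ℝ => Ti B (γ s)) J :=
    (Ti_contDiff B).continuous.comp_continuousOn hγ
  have c1 : ContinuousOn (fun s : ℝ => actP (Ti B (γ s)) (γ' s)) J :=
    bilC_continuousOn _ cTi hγ'
  have c2 : ContinuousOn (fun s : ℝ => integ (actP (Ti B (γ s)) (γ' s))) J :=
    integ.continuous.comp_continuousOn c1
  have c3 : ContinuousOn (fun s : ℝ => adP B (integ (actP (Ti B (γ s)) (γ' s)))) J :=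
    (adP B).continuous.comp_continuousOn c2
  have c4 := mul_continuousOn_path cTr c3
  have c5 : ContinuousOn (fun s : ℝ =>
      actP (Tr B (γ s) * adP B (integ (actP (Ti B (γ s)) (γ' s)))) (δ s)) J :=
    bilC_continuousOn _ c4 hδ
  have c6 : ContinuousOn (fun s : ℝ => actP (Tr B (γ s)) (δ' s)) J :=
    bilC_continuousOn _ cTr hδ'
  exact hγ'.add (c5.add c6)

theorem local_lemma (B : g →ₗ[ℝ] g →ₗ[ℝ] g) (hB : IsLieBracket B) (a : ℝ) (ha : 0 < a) :
    ∃ ε > 0, ∀ δ : C(II, g), ‖δ‖ < ε → ∃ x : g, ‖x‖ ≤ a ∧ IsUnit (Dx B x) ∧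
      Hor B 0 (mulP B δ (cst x)) := by
  obtain ⟨ε, hε, h⟩ := local_ode B a ha
  refine ⟨ε, hε, fun δ hδ => ?_⟩
  obtain ⟨α, α0, αm, αd, αc⟩ := h δ hδ
  have cα : ContinuousOn α II := fun s hs => (αd s hs).continuousWithinAt
  refine ⟨α 1, (αm 1 one_mem_unit).1, (αm 1 one_mem_unit).2, ?_⟩
  have cγ : ContinuousOn (fun s : ℝ => s • δ) II := (line_continuous δ).continuousOn
  have cx : ContinuousOn (fun s => cst (α s)) II := cst.continuous.comp_continuousOn cα
  have cx' : ContinuousOn (fun s => cst (Gx B (α s) (Thet B (s • δ) δ))) II :=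
    cst.continuous.comp_continuousOn αc
  refine ⟨fun s => mulP B (s • δ) (cst (α s)), _,
    ⟨fun s hs => mulP_hasDeriv B hB (line_hasDeriv δ II s) (cst_hasDeriv (αd s hs)),
      mulP_deriv_cont B cγ cx (continuousOn_const (c := δ)) cx', fun s hs => ?_⟩, ?_, ?_⟩
  · refine (Thet_cocycle B hB (s • δ) δ (cst (α s))
      (cst (Gx B (α s) (Thet B (s • δ) δ)))).trans ?_
    rw [Thet_cst]
    have hu := (αm s hs).2
    set θ := Thet B (s • δ) δ
    change Hx B (α s) θ + (Dx B (α s) * -(Ring.inverse (Dx B (α s)) * Hx B (α s))) θ = 0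
    rw [mul_neg, ← mul_assoc, Ring.mul_inverse_cancel _ hu, one_mul]
    simp
  · simp [mulP, α0]
  · simp

theorem local_central (B : g →ₗ[ℝ] g →ₗ[ℝ] g) (hB : IsLieBracket B) (a : ℝ) (ha : 0 < a) :
    ∃ ε > 0, ∀ δ : C(II, g), ‖δ‖ < ε → Tr B δ ⟨1, one_mem_unit⟩ = 1 →
      ∃ x : g, ‖x‖ ≤ a ∧ (∀ y, B x y = 0) ∧ Hor B 0 (δ + cst x) := by
  obtain ⟨ε, hε, h⟩ := local_lemma B hB a ha
  refine ⟨ε, hε, fun δ hδ h1 => ?_⟩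
  obtain ⟨x, hx, hu, hh⟩ := h δ hδ
  have h2 := hh.Tr_one hB
  rw [Tr_zero_path, Tr_mulP B hB, ContinuousMap.mul_apply, h1] at h2
  have h3 : Tr B (cst x) ⟨1, one_mem_unit⟩ = 1 := by
    rw [one_mul] at h2; exact h2.symm
  have h4 : Hx B x = 1 := by rw [Hx, Ti_apply, h3, Ring.inverse_one]
  have h5 := Hx_eq B x
  rw [h4, sub_self, zero_add] at h5
  have h6 : adCL B x = 0 := hu.mul_right_eq_zero.1 h5
  have hc : ∀ y, B x y = 0 := fun y => by rw [← adCL_apply, h6]; rfl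
  refine ⟨x, hx, hc, ?_⟩
  have h7 : mulP B δ (cst x) = δ + cst x := by
    unfold mulP
    congr 1
    ext1 t
    exact Tr_center B hB δ t x hc
  rwa [h7] at hh

end LocalLemma

section Final

open Set MeasureTheory

set_option synthInstance.maxHeartbeats 200000
set_option linter.unusedSectionVars false

local notation "II" => (Set.Icc (0:ℝ) 1)

variable {g : Type*} [NormedAddCommGroup g] [NormedSpace ℝ g] [FiniteDimensional ℝ g]

theorem mulP_zero_right (B : g →ₗ[ℝ] g →ₗ[ℝ] g) (p : C(II, g)) : mulP B p 0 = p := by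
  unfold mulP
  rw [map_zero, add_zero]

theorem mulP_zero_left (B : g →ₗ[ℝ] g →ₗ[ℝ] g) (p : C(II, g)) : mulP B 0 p = p := by
  have h : Tr B (0 : C(II, g)) = 1 := Tr_zero_path B
  unfold mulP
  rw [h, actP_one, zero_add]

theorem mulP_cst (B : g →ₗ[ℝ] g →ₗ[ℝ] g) (hB : IsLieBracket B) (p : C(II, g)) (x : g)
    (hx : ∀ y, B x y = 0) : mulP B p (cst x) = p + cst x := by
  unfold mulP
  congr 1
  ext1 t
  exact Tr_center B hB p t x hx

theorem mulP_add_cst (B : g →ₗ[ℝ] g →ₗ[ℝ] g) (hB : IsLieBracket B) (p δ : C(II, g)) (x : g)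
    (hx : ∀ y, B x y = 0) : mulP B p (δ + cst x) = mulP B p δ + cst x := by
  have h := mulP_cst B hB p x hx
  unfold mulP at h ⊢
  rw [map_add, ← add_assoc, add_left_cancel h]

theorem mulP_inv_left (B : g →ₗ[ℝ] g →ₗ[ℝ] g) (hB : IsLieBracket B) (p : C(II, g)) :
    mulP B (ldivP B p 0) p = 0 := by
  have h1 : mulP B p (mulP B (ldivP B p 0) p) = mulP B p 0 := by
    rw [← mulP_assoc B hB, mulP_ldivP, mulP_zero_left, mulP_zero_right]
  have h2 := congrArg (ldivP B p) h1
  rwa [ldivP_mulP, ldivP_mulP] at h2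

theorem hor_cst_unique (B : g →ₗ[ℝ] g →ₗ[ℝ] g) (hB : IsLieBracket B) (γ : C(II, g)) (x y : g)
    (hx : ∀ z, B x z = 0) (hy : ∀ z, B y z = 0) (h : Hor B 0 (γ + cst x))
    (h' : Hor B 0 (γ + cst y)) : x = y := by
  have h1 : Hor B (γ + cst x) (γ + cst y) := h.symm.trans h'
  have hc : ∀ z, B (y - x) z = 0 := by
    intro z
    rw [map_sub, LinearMap.sub_apply, hx, hy, sub_zero]
  have h2 : γ + cst y = mulP B (γ + cst x) (cst (y - x)) := by
    rw [mulP_cst B hB _ _ hc, map_sub]; abel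
  rw [h2] at h1
  have h3 := h1.left hB (ldivP B (γ + cst x) 0)
  rw [← mulP_assoc B hB, mulP_inv_left B hB, mulP_zero_left] at h3
  have h4 := hor_central B hB (y - x) hc h3
  exact (sub_eq_zero.1 h4).symm

theorem ldivP_continuous (B : g →ₗ[ℝ] g →ₗ[ℝ] g) (γ : C(II, g)) :
    Continuous fun p : C(II, g) => ldivP B p γ := by
  have h1 : Continuous fun p : C(II, g) => Ti B p := (Ti_contDiff B).continuous
  exact (actP.continuous.comp h1).clm_apply (continuous_const.sub continuous_id)

theorem ldivP_self (B : g →ₗ[ℝ] g →ₗ[ℝ] g) (γ : C(II, g)) : ldivP B γ γ = 0 := by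
  unfold ldivP
  rw [sub_self, map_zero]

theorem isClosed_Tr_one (B : g →ₗ[ℝ] g →ₗ[ℝ] g) :
    IsClosed {γ : C(II, g) | Tr B γ ⟨1, one_mem_unit⟩ = 1} := by
  have h1 : Continuous fun p : C(II, g) => Tr B p := (Tr_contDiff B).continuous
  have h2 : Continuous fun p : C(II, g) => Tr B p ⟨1, one_mem_unit⟩ :=
    (continuous_eval_const (⟨1, one_mem_unit⟩ : II)).comp h1
  exact isClosed_eq h2 continuous_const

theorem Tr_one_of_hor (B : g →ₗ[ℝ] g →ₗ[ℝ] g) (hB : IsLieBracket B) {γ : C(II, g)}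
    (h : Hor B 0 γ) : Tr B γ ⟨1, one_mem_unit⟩ = 1 := by
  have h1 := h.Tr_one hB
  have h2 : Tr B (0 : C(II, g)) = 1 := Tr_zero_path B
  rw [h2] at h1
  exact h1.symm

theorem exists_near {X Y : Type*} [TopologicalSpace X] [NormedAddCommGroup Y] (F : X → Y)
    (hF : Continuous F) (S : Set X) (x : X) (hx : x ∈ closure S) (h0 : F x = 0) (ε : ℝ)
    (hε : 0 < ε) : ∃ p ∈ S, ‖F p‖ < ε := by
  have ho : IsOpen {p | ‖F p‖ < ε} := isOpen_lt hF.norm continuous_const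
  obtain ⟨p, h1, h2⟩ := mem_closure_iff.1 hx _ ho (by simpa [h0] using hε)
  exact ⟨p, h2, h1⟩

theorem closure_central (B : g →ₗ[ℝ] g →ₗ[ℝ] g) (hB : IsLieBracket B) (γ : C(II, g))
    (hγ : γ ∈ closure {γ | Hor B 0 γ}) (a : ℝ) (ha : 0 < a) :
    ∃ x : g, ‖x‖ ≤ a ∧ (∀ y, B x y = 0) ∧ Hor B 0 (γ + cst x) := by
  have hT : Tr B γ ⟨1, one_mem_unit⟩ = 1 :=
    closure_minimal (fun p hp => Tr_one_of_hor B hB hp) (isClosed_Tr_one B) hγ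
  obtain ⟨ε, hε, h⟩ := local_central B hB a ha
  obtain ⟨p, hp, hn⟩ := exists_near (fun p => ldivP B p γ) (ldivP_continuous B γ) _ γ hγ
    (ldivP_self B γ) ε hε
  have hp' : Hor B 0 p := hp
  have hTp := Tr_one_of_hor B hB hp'
  have h1 : Tr B (ldivP B p γ) ⟨1, one_mem_unit⟩ = 1 := by
    have h2 := Tr_mulP B hB p (ldivP B p γ)
    rw [mulP_ldivP] at h2
    rw [h2, ContinuousMap.mul_apply, hTp] at hT
    rw [one_mul] at hT
    exact hT
  obtain ⟨x, hxa, hx, hh⟩ := h _ hn h1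
  refine ⟨x, hxa, hx, hp'.trans ?_⟩
  have h3 := hh.left hB p
  rwa [mulP_zero_right, mulP_add_cst B hB _ _ _ hx, mulP_ldivP] at h3

theorem hor_closed (B : g →ₗ[ℝ] g →ₗ[ℝ] g) (hB : IsLieBracket B) :
    IsClosed {γ : C(II, g) | Hor B 0 γ} := by
  refine isClosed_of_closure_subset fun γ hγ => ?_
  obtain ⟨x, -, hx, hh⟩ := closure_central B hB γ hγ 1 one_pos
  have hx0 : ‖x‖ ≤ 0 := by
    refine le_of_forall_pos_le_add fun a ha => ?_
    obtain ⟨y, hya, hy, hh'⟩ := closure_central B hB γ hγ a ha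
    rw [hor_cst_unique B hB γ x y hx hy hh hh', zero_add]
    exact hya
  have hx1 : x = 0 := norm_le_zero_iff.1 hx0
  rw [hx1, map_zero, add_zero] at hh
  exact hh

theorem hor_pathConnected (B : g →ₗ[ℝ] g →ₗ[ℝ] g) :
    IsPathConnected {γ : C(II, g) | Hor B 0 γ} := by
  refine ⟨0, Hor.refl B 0, fun {γ} hγ => ?_⟩
  obtain ⟨Γ, Γ', h, h0, h1⟩ := hγ
  refine JoinedIn.ofLine (f := Γ) (fun s hs => (h.1 s hs).continuousWithinAt) h0 h1 ?_
  rintro _ ⟨u, hu, rfl⟩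
  have hu' : u ∈ II := hu
  refine ⟨_, _, h.reparam (fun s => s * u) (fun _ => u) (fun s _ => ?_) continuousOn_const ?_,
    by simpa using h0, by simp⟩
  · simpa using (hasDerivAt_id s).mul_const u
  · intro s hs
    exact ⟨mul_nonneg hs.1 hu'.1, mul_le_one₀ hs.2 hu'.1 hu'.2⟩

end Final

/-- The subgroup `P(g)₀` of the path group `P(g) = C([0,1], g)` is a closed and
path-connected subset of the Banach space `C([0,1], g)` (supremum norm). -/
theorem pathZero_isClosed_isPathConnected {g : Type*}
    [NormedAddCommGroup g] [NormedSpace ℝ g] [FiniteDimensional ℝ g]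
    (B : g →ₗ[ℝ] g →ₗ[ℝ] g) (hB : IsLieBracket B) :
    IsClosed {γ : C(Set.Icc (0:ℝ) 1, g) | InPathZero B γ} ∧
    IsPathConnected {γ : C(Set.Icc (0:ℝ) 1, g) | InPathZero B γ} := by
  have h : {γ : C(Set.Icc (0:ℝ) 1, g) | InPathZero B γ} =
      {γ : C(Set.Icc (0:ℝ) 1, g) | Hor B 0 γ} := Set.ext fun γ => inPathZero_iff B γ
  rw [h]
  exact ⟨hor_closed B hB, hor_pathConnected B⟩
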